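/- Existence and uniqueness of the rough integral of a controlled one-form along a controlled path (Euclidean version): In the setting of the almost-additivity theorem — X a weak-geometric p-rough path with control ω on [0,T]; (ψ, U) a local gauge on ℝ^d with open domain D; W₀ open convex with W₀ × W₀ ⊆ D; (y, y†) an ℝ^d-valued rough path controlled by X with y([0,T]) ⊆ W₀; V a Banach space; (α, α†) a V-valued U-controlled one-form along y; S^𝒢_m(v,w) := ((D₂U)(m,m)⟨v⟩)(w) − (D₂²ψ)(m,m)(v,w); and z̃_{s,t} := α_s(ψ(y_s,y_t) + S^𝒢_{y_s}[(y_s† ⊗ y_s†)𝕏_{s,t}]) + α_s†((I_W ⊗ y_s†)𝕏_{s,t}) — there exists a unique V-valued rough path (z, z†) controlled by X on [0,T] such that z_0 = 0, z_s† = α_s ∘ y_s† for all s, and for some C < ∞, |z_t − z_s − z̃_{s,t}| ≤ C ω(s,t)^{3/p} for all 0 ≤ s ≤ t ≤ T. -/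

import Mathlib

noncomputable section

open scoped BigOperators

/-- `ℝ^n` with the Euclidean norm. -/
abbrev Euc (n : ℕ) : Type := EuclideanSpace ℝ (Fin n)

/-- The `i`-th standard basis vector of `ℝ^n`. -/
def eb {n : ℕ} (i : Fin n) : Euc n := EuclideanSpace.single i 1

/-- Tensor product of two Euclidean vectors, realized in `ℝ^{n×m}` with the Euclidean norm. -/
def tensorE {n m : ℕ} (v : Euc n) (w : Euc m) : EuclideanSpace ℝ (Fin n × Fin m) :=
  (EuclideanSpace.equiv (Fin n × Fin m) ℝ).symm fun p => v p.1 * w p.2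

/-- Application of the (unique) linear extension of a bilinear map `B` to a tensor
`X ∈ ℝ^n ⊗ ℝ^m ≅ ℝ^{n × m}`. -/
def tapply {n m : ℕ} {V : Type*} [NormedAddCommGroup V] [NormedSpace ℝ V]
    (B : Euc n → Euc m → V) (X : EuclideanSpace ℝ (Fin n × Fin m)) : V :=
  ∑ q : Fin n × Fin m, X q • B (eb q.1) (eb q.2)
/-- `ω` is a control on the simplex `{(s,t) : 0 ≤ s ≤ t ≤ T}`. -/
structure IsControl (T : ℝ) (ω : ℝ → ℝ → ℝ) : Prop where
  cont : ContinuousOn (fun q : ℝ × ℝ => ω q.1 q.2)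
    {q : ℝ × ℝ | 0 ≤ q.1 ∧ q.1 ≤ q.2 ∧ q.2 ≤ T}
  nonneg : ∀ ⦃s t : ℝ⦄, 0 ≤ s → s ≤ t → t ≤ T → 0 ≤ ω s t
  zero : ∀ ⦃s : ℝ⦄, 0 ≤ s → s ≤ T → ω s s = 0
  superadditive : ∀ ⦃s t u : ℝ⦄, 0 ≤ s → s ≤ t → t ≤ u → u ≤ T → ω s t + ω t u ≤ ω s u
/-- `(x, XX)` is a `p`-rough path with control `ω` on `[0,T]`. -/
structure IsRoughPath (T p : ℝ) {k : ℕ} (ω : ℝ → ℝ → ℝ)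
    (x : ℝ → Euc k) (XX : ℝ → ℝ → EuclideanSpace ℝ (Fin k × Fin k)) : Prop where
  cont_x : ContinuousOn x (Set.Icc 0 T)
  cont_XX : ContinuousOn (fun q : ℝ × ℝ => XX q.1 q.2)
    {q : ℝ × ℝ | 0 ≤ q.1 ∧ q.1 ≤ q.2 ∧ q.2 ≤ T}
  chen : ∀ ⦃s t u : ℝ⦄, 0 ≤ s → s ≤ t → t ≤ u → u ≤ T →
    XX s u = XX s t + XX t u + tensorE (x t - x s) (x u - x t)
  bound_x : ∀ ⦃s t : ℝ⦄, 0 ≤ s → s ≤ t → t ≤ T → ‖x t - x s‖ ≤ ω s t ^ (1 / p)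
  bound_XX : ∀ ⦃s t : ℝ⦄, 0 ≤ s → s ≤ t → t ≤ T → ‖XX s t‖ ≤ ω s t ^ (2 / p)
/-- The rough path `(x, XX)` is weak-geometric: the symmetric part of `XX s t` is
`(1/2) x_{s,t} ⊗ x_{s,t}`. -/
def IsWeakGeometric (T : ℝ) {k : ℕ} (x : ℝ → Euc k)
    (XX : ℝ → ℝ → EuclideanSpace ℝ (Fin k × Fin k)) : Prop :=
  ∀ ⦃s t : ℝ⦄, 0 ≤ s → s ≤ t → t ≤ T → ∀ i j : Fin k,
    XX s t (i, j) + XX s t (j, i) = (x t - x s) i * (x t - x s) j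
/-- `(y, y')` is a `V`-valued rough path controlled by `X = (x, ·)` (with control `ω`)
on the interval `[a, b]`. -/
def IsCRP (p : ℝ) {k : ℕ} (ω : ℝ → ℝ → ℝ) (x : ℝ → Euc k)
    {V : Type*} [NormedAddCommGroup V] [NormedSpace ℝ V]
    (a b : ℝ) (y : ℝ → V) (y' : ℝ → Euc k →L[ℝ] V) : Prop :=
  ContinuousOn y (Set.Icc a b) ∧ ContinuousOn y' (Set.Icc a b) ∧
    ∃ C : ℝ, ∀ ⦃s t : ℝ⦄, a ≤ s → s ≤ t → t ≤ b →
      ‖y t - y s - y' s (x t - x s)‖ ≤ C * ω s t ^ (2 / p) ∧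
      ‖y' t - y' s‖ ≤ C * ω s t ^ (1 / p)
/-- `(ψ, U)` is a local gauge on `ℝ^d` with open domain `D`. -/
structure IsLocalGauge {d : ℕ} (D : Set (Euc d × Euc d))
    (ψ : Euc d × Euc d → Euc d) (U : Euc d × Euc d → Euc d →L[ℝ] Euc d) : Prop where
  open_dom : IsOpen D
  smooth_psi : ContDiffOn ℝ (⊤ : ℕ∞) ψ D
  smooth_U : ContDiffOn ℝ (⊤ : ℕ∞) U D
  diag_psi : ∀ x : Euc d, (x, x) ∈ D → ψ (x, x) = 0
  diag_dpsi : ∀ x : Euc d, (x, x) ∈ D →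
    fderiv ℝ (fun w => ψ (x, w)) x = ContinuousLinearMap.id ℝ (Euc d)
  diag_U : ∀ x : Euc d, (x, x) ∈ D → U (x, x) = ContinuousLinearMap.id ℝ (Euc d)

/-- `(α, α')` is a `V`-valued `U`-controlled (rough) one-form along `y` on `[0,T]`:
`α'_s ∈ L(W ⊗ ℝ^d, V)` is recorded in curried form, and the second estimate is recorded
slotwise in the `W`-variable (equivalently, in operator norm). -/
def IsControlledOneForm (T p : ℝ) {k d : ℕ} (ω : ℝ → ℝ → ℝ) (x : ℝ → Euc k)
    (U : Euc d × Euc d → Euc d →L[ℝ] Euc d) (y : ℝ → Euc d)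
    {V : Type*} [NormedAddCommGroup V] [NormedSpace ℝ V]
    (α : ℝ → Euc d →L[ℝ] V) (α' : ℝ → Euc k →L[ℝ] Euc d →L[ℝ] V) : Prop :=
  ContinuousOn α (Set.Icc 0 T) ∧ ContinuousOn α' (Set.Icc 0 T) ∧
    ∃ C : ℝ, ∀ ⦃s t : ℝ⦄, 0 ≤ s → s ≤ t → t ≤ T →
      ‖(α t).comp (U (y t, y s)) - α s - α' s (x t - x s)‖ ≤ C * ω s t ^ (2 / p) ∧
      ∀ w : Euc k,
        ‖(α' t w).comp (U (y t, y s)) - α' s w‖ ≤ C * ‖w‖ * ω s t ^ (1 / p)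

/-- The compatibility bilinear form `S^𝒢_m(v, w) = (D₂U)(m,m)⟨v⟩⟨w⟩ − (D₂²ψ)(m,m)(v, w)`
of a gauge `𝒢 = (ψ, U)` on `ℝ^d`. -/
def Sgauge {d : ℕ} (ψ : Euc d × Euc d → Euc d)
    (U : Euc d × Euc d → Euc d →L[ℝ] Euc d) (m v w : Euc d) : Euc d :=
  fderiv ℝ (fun z => U (m, z)) m v w
    - fderiv ℝ (fun z => fderiv ℝ (fun z' => ψ (m, z')) z) m v w

/-- The local gauge-integrand
`z̃_{s,t} = α_s (ψ(y_s,y_t) + S^𝒢_{y_s}[(y'_s ⊗ y'_s) 𝕏_{s,t}]) + α'_s ((I ⊗ y'_s) 𝕏_{s,t})`. -/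
def gaugeIntegrand {k d : ℕ} (ψ : Euc d × Euc d → Euc d)
    (U : Euc d × Euc d → Euc d →L[ℝ] Euc d)
    (XX : ℝ → ℝ → EuclideanSpace ℝ (Fin k × Fin k))
    (y : ℝ → Euc d) (y' : ℝ → Euc k →L[ℝ] Euc d)
    {V : Type*} [NormedAddCommGroup V] [NormedSpace ℝ V]
    (α : ℝ → Euc d →L[ℝ] V) (α' : ℝ → Euc k →L[ℝ] Euc d →L[ℝ] V)
    (s t : ℝ) : V :=
  α s (ψ (y s, y t) +
      tapply (fun v w => Sgauge ψ U (y s) (y' s v) (y' s w)) (XX s t)) +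
    tapply (fun w v => α' s w (y' s v)) (XX s t)

/-! The proof is the classical Young–Lyons sewing argument. The integrand `z̃` is almost additive,
`z̃_{s,u} - z̃_{s,t} - z̃_{t,u} = O(ω(s,u)^{3/p})`, with an exponent `3/p > 1`; hence its Riemann
sums converge and their limit is the only path whose increments agree with `z̃` up to
`O(ω^{3/p})`. Almost additivity is a second-order Taylor expansion of the gauge at the diagonal:
the first-order parts of `α_t - α_s` and of `ψ(y_s,y_u) - ψ(y_s,y_t) - ψ(y_t,y_u)` leave the
bilinear term `-(α_s ∘ S^𝒢 + α'_s)(x_{s,t} ⊗ x_{t,u})`, which Chen's identity for `𝕏` cancels. -/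

/-! ### Controls and partitions -/

section Control

open Finset

variable {T : ℝ} {ω : ℝ → ℝ → ℝ}

theorem IsControl.mono (hω : IsControl T ω) {s s' t' t : ℝ} (hs : 0 ≤ s) (hss' : s ≤ s')
    (hst' : s' ≤ t') (htt' : t' ≤ t) (ht : t ≤ T) : ω s' t' ≤ ω s t := by
  have h₁ := hω.superadditive hs hss' (hst'.trans htt') ht
  have h₂ := hω.superadditive (hs.trans hss') hst' htt' ht
  have h₃ := hω.nonneg hs hss' (hst'.trans (htt'.trans ht))
  have h₄ := hω.nonneg (hs.trans (hss'.trans hst')) htt' ht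
  linarith

theorem IsControl.exists_forall_lt (hω : IsControl T ω) {η : ℝ} (hη : 0 < η) :
    ∃ δ > 0, ∀ s t, 0 ≤ s → s ≤ t → t ≤ T → t - s < δ → ω s t < η := by
  have hcompact : IsCompact {q : ℝ × ℝ | 0 ≤ q.1 ∧ q.1 ≤ q.2 ∧ q.2 ≤ T} := by
    refine (isCompact_Icc (a := ((0, 0) : ℝ × ℝ)) (b := (T, T))).of_isClosed_subset ?_ ?_
    · exact (isClosed_le continuous_const continuous_fst).inter
        ((isClosed_le continuous_fst continuous_snd).inter
          (isClosed_le continuous_snd continuous_const))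
    · rintro q ⟨h₁, h₂, h₃⟩
      exact ⟨⟨h₁, h₁.trans h₂⟩, ⟨h₂.trans h₃, h₃⟩⟩
  obtain ⟨δ, hδ, hclose⟩ := Metric.uniformContinuousOn_iff.1
    (hcompact.uniformContinuousOn_of_continuous hω.cont) η hη
  refine ⟨δ, hδ, fun s t hs hst ht hδst => ?_⟩
  have hdist : dist (s, t) (s, s) < δ := by
    rw [dist_prod_same_left, Real.dist_eq, abs_of_nonneg (sub_nonneg.2 hst)]
    exact hδst
  have h := hclose (s, t) ⟨hs, hst, ht⟩ (s, s) ⟨hs, le_rfl, hst.trans ht⟩ hdist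
  rw [hω.zero hs (hst.trans ht), Real.dist_0_eq_abs] at h
  exact (le_abs_self _).trans_lt h

section Monotone

variable {τ : ℕ → ℝ}

theorem IsControl.sum_le (hω : IsControl T ω) (hτ : Monotone τ) (hτT : ∀ i, τ i ∈ Set.Icc 0 T)
    (n : ℕ) : ∑ i ∈ range n, ω (τ i) (τ (i + 1)) ≤ ω (τ 0) (τ n) := by
  induction n with
  | zero => rw [sum_range_zero, hω.zero (hτT 0).1 (hτT 0).2]
  | succ n ih =>
    rw [sum_range_succ]
    exact (add_le_add_left ih _).trans
      (hω.superadditive (hτT 0).1 (hτ n.zero_le) (hτ n.le_succ) (hτT (n + 1)).2)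

theorem IsControl.sum_rpow_le (hω : IsControl T ω) (hτ : Monotone τ)
    (hτT : ∀ i, τ i ∈ Set.Icc 0 T) {θ η : ℝ} (hθ : 1 ≤ θ) (hη : ∀ i, ω (τ i) (τ (i + 1)) ≤ η)
    (n : ℕ) :
    ∑ i ∈ range n, ω (τ i) (τ (i + 1)) ^ θ ≤ η ^ (θ - 1) * ω (τ 0) (τ n) := by
  have hnonneg (i : ℕ) : 0 ≤ ω (τ i) (τ (i + 1)) :=
    hω.nonneg (hτT i).1 (hτ i.le_succ) (hτT (i + 1)).2
  have hterm (i : ℕ) : ω (τ i) (τ (i + 1)) ^ θ ≤ η ^ (θ - 1) * ω (τ i) (τ (i + 1)) := by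
    calc ω (τ i) (τ (i + 1)) ^ θ
        = ω (τ i) (τ (i + 1)) ^ (θ - 1) * ω (τ i) (τ (i + 1)) := by
          conv_lhs => rw [← sub_add_cancel θ 1]
          rw [Real.rpow_add_of_nonneg (hnonneg i) (by linarith) zero_le_one, Real.rpow_one]
      _ ≤ η ^ (θ - 1) * ω (τ i) (τ (i + 1)) := by
          exact mul_le_mul_of_nonneg_right
            (Real.rpow_le_rpow (hnonneg i) (hη i) (by linarith)) (hnonneg i)
  calc ∑ i ∈ range n, ω (τ i) (τ (i + 1)) ^ θ
      ≤ ∑ i ∈ range n, η ^ (θ - 1) * ω (τ i) (τ (i + 1)) := sum_le_sum fun i _ => hterm i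
    _ = η ^ (θ - 1) * ∑ i ∈ range n, ω (τ i) (τ (i + 1)) := by rw [mul_sum]
    _ ≤ η ^ (θ - 1) * ω (τ 0) (τ n) :=
        mul_le_mul_of_nonneg_left (hω.sum_le hτ hτT n)
          (Real.rpow_nonneg ((hnonneg 0).trans (hη 0)) _)

theorem IsControl.exists_le_half (hω : IsControl T ω) (hτ : Monotone τ)
    (hτT : ∀ i, τ i ∈ Set.Icc 0 T) {n : ℕ} (hn : 0 < n) :
    ∃ j < n, ω (τ 0) (τ j) ≤ ω (τ 0) (τ n) / 2 ∧ ω (τ (j + 1)) (τ n) ≤ ω (τ 0) (τ n) / 2 := by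
  by_contra! hfail
  have hτn : 0 ≤ ω (τ 0) (τ n) := hω.nonneg (hτT 0).1 (hτ n.zero_le) (hτT n).2
  have hleft (j : ℕ) (hj : j ≤ n) : ω (τ 0) (τ j) ≤ ω (τ 0) (τ n) / 2 := by
    induction j with
    | zero => rw [hω.zero (hτT 0).1 (hτT 0).2]; positivity
    | succ j ih =>
      have hright := hfail j hj (ih (Nat.le_of_succ_le hj))
      have := hω.superadditive (hτT 0).1 (hτ (j + 1).zero_le) (hτ hj) (hτT n).2
      linarith
  have hlast := hfail (n - 1) (by omega) (hleft _ (n.sub_le 1))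
  rw [Nat.sub_add_cancel hn, hω.zero (hτT n).1 (hτT n).2] at hlast
  linarith

end Monotone

/-- The dyadic partition of level `n` of `[0, T]`, with its points clamped to `[s, t]`. Clamping
one global grid makes the partitions of adjacent intervals compatible with each other. -/
def dyadicPartition (T s t : ℝ) (n i : ℕ) : ℝ := max s (min (T * i / 2 ^ n) t)

section DyadicPartition

variable {s t u : ℝ}

theorem dyadicPartition_mono (hT : 0 ≤ T) (s t : ℝ) (n : ℕ) :
    Monotone (dyadicPartition T s t n) := fun i j hij => by
  unfold dyadicPartition
  gcongr

theorem dyadicPartition_mem_Icc (hst : s ≤ t) (n i : ℕ) :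
    dyadicPartition T s t n i ∈ Set.Icc s t :=
  ⟨le_max_left _ _, max_le hst (min_le_right _ _)⟩

theorem dyadicPartition_mem_Icc_zero (hs : 0 ≤ s) (hst : s ≤ t) (ht : t ≤ T) (n i : ℕ) :
    dyadicPartition T s t n i ∈ Set.Icc 0 T :=
  Set.Icc_subset_Icc hs ht (dyadicPartition_mem_Icc hst n i)

theorem dyadicPartition_zero (hs : 0 ≤ s) (hst : s ≤ t) (n : ℕ) :
    dyadicPartition T s t n 0 = s := by
  simp [dyadicPartition, hs, hs.trans hst]

theorem dyadicPartition_two_pow (hst : s ≤ t) (ht : t ≤ T) (n : ℕ) :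
    dyadicPartition T s t n (2 ^ n) = t := by
  simp [dyadicPartition, hst, ht]

theorem dyadicPartition_mul_two_pow (T s t : ℝ) (n k i : ℕ) :
    dyadicPartition T s t (n + k) (i * 2 ^ k) = dyadicPartition T s t n i := by
  have : T * ↑(i * 2 ^ k) / 2 ^ (n + k) = T * i / 2 ^ n := by
    push_cast
    rw [pow_add]
    field_simp
  rw [dyadicPartition, dyadicPartition, this]

theorem dyadicPartition_succ_sub_le (hT : 0 ≤ T) (s t : ℝ) (n i : ℕ) :
    dyadicPartition T s t n (i + 1) - dyadicPartition T s t n i ≤ T / 2 ^ n := by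
  have hmin := max_sub_max_le_max s (min (T * ↑(i + 1) / 2 ^ n) t) s (min (T * i / 2 ^ n) t)
  have hgrid : T * ↑(i + 1) / 2 ^ n - T * i / 2 ^ n = T / 2 ^ n := by push_cast; ring
  have hstep : 0 ≤ T / 2 ^ n := by positivity
  refine hmin.trans (max_le (by rwa [sub_self]) ?_)
  refine (le_abs_self _).trans ((abs_min_sub_min_le_max _ _ _ _).trans ?_)
  rw [hgrid, abs_of_nonneg hstep, sub_self, abs_zero, max_eq_left hstep]

theorem dyadicPartition_left (T : ℝ) (hst : s ≤ t) (htu : t ≤ u) (n i : ℕ) :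
    dyadicPartition T s t n i = min (dyadicPartition T s u n i) t := by
  rw [dyadicPartition, dyadicPartition, max_min_distrib_left, max_min_distrib_left,
    max_eq_right hst, max_eq_right (hst.trans htu), min_assoc, min_eq_right htu]

theorem dyadicPartition_right (T : ℝ) (hst : s ≤ t) (n i : ℕ) :
    dyadicPartition T t u n i = max (dyadicPartition T s u n i) t := by
  rw [dyadicPartition, dyadicPartition, max_right_comm, max_eq_right hst]

theorem IsControl.tendsto_sum_rpow (hω : IsControl T ω) {θ : ℝ} (hθ : 1 < θ) (hs : 0 ≤ s)
    (hst : s ≤ t) (ht : t ≤ T) :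
    Filter.Tendsto (fun n => ∑ i ∈ range (2 ^ n),
      ω (dyadicPartition T s t n i) (dyadicPartition T s t n (i + 1)) ^ θ)
      Filter.atTop (nhds 0) := by
  have hT : 0 ≤ T := hs.trans (hst.trans ht)
  have hmem := dyadicPartition_mem_Icc_zero hs hst ht
  have hmono := dyadicPartition_mono hT s t
  have hmesh : Filter.Tendsto (fun n : ℕ => T / 2 ^ n) Filter.atTop (nhds 0) :=
    tendsto_const_nhds.div_atTop (tendsto_pow_atTop_atTop_of_one_lt one_lt_two)
  have hη_small : Filter.Tendsto (fun η : ℝ => η ^ (θ - 1) * ω s t) (nhdsWithin 0 (Set.Ioi 0))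
      (nhds 0) := by
    have : ContinuousAt (fun η : ℝ => η ^ (θ - 1) * ω s t) 0 :=
      (Real.continuousAt_rpow_const 0 _ (.inr (by linarith))).mul_const _
    have hzero : (0 : ℝ) ^ (θ - 1) * ω s t = 0 := by
      rw [Real.zero_rpow (by linarith), zero_mul]
    simpa only [hzero] using this.tendsto.mono_left nhdsWithin_le_nhds
  refine tendsto_order.2 ⟨fun a ha => .of_forall fun n => ha.trans_le ?_, fun ε hε => ?_⟩
  · exact sum_nonneg fun i _ => Real.rpow_nonneg
      (hω.nonneg (hmem n i).1 (hmono n i.le_succ) (hmem n (i + 1)).2) _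
  obtain ⟨η, hηε, hη⟩ :=
    ((hη_small.eventually_lt_const hε).and self_mem_nhdsWithin).exists
  obtain ⟨δ, hδ, hωη⟩ := hω.exists_forall_lt hη
  filter_upwards [hmesh.eventually_lt_const hδ] with n hn
  refine (hω.sum_rpow_le (hmono n) (hmem n) hθ.le (fun i => (hωη _ _ (hmem n i).1
    (hmono n i.le_succ) (hmem n (i + 1)).2 ?_).le) _).trans_lt ?_
  · exact (dyadicPartition_succ_sub_le hT s t n i).trans_lt hn
  · rwa [dyadicPartition_zero hs hst, dyadicPartition_two_pow hst ht]

end DyadicPartition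

end Control

/-! ### The sewing lemma -/

section Sewing

open Finset Filter Topology

variable {T θ C K : ℝ} {ω : ℝ → ℝ → ℝ} {V : Type*}

/-- The Riemann sum of the two-parameter integrand `Ξ` over the partition `τ 0 ≤ ⋯ ≤ τ n`. -/
def riemannSum [AddCommMonoid V] (Ξ : ℝ → ℝ → V) (τ : ℕ → ℝ) (n : ℕ) : V :=
  ∑ i ∈ range n, Ξ (τ i) (τ (i + 1))

theorem riemannSum_succ [AddCommMonoid V] (Ξ : ℝ → ℝ → V) (τ : ℕ → ℝ) (n : ℕ) :
    riemannSum Ξ τ (n + 1) = riemannSum Ξ τ n + Ξ (τ n) (τ (n + 1)) :=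
  sum_range_succ ..

theorem riemannSum_add [AddCommMonoid V] (Ξ : ℝ → ℝ → V) (τ : ℕ → ℝ) (m n : ℕ) :
    riemannSum Ξ τ (m + n) = riemannSum Ξ τ m + riemannSum Ξ (fun i => τ (m + i)) n :=
  sum_range_add ..

theorem riemannSum_mul [AddCommMonoid V] (Ξ : ℝ → ℝ → V) (τ : ℕ → ℝ) (m r : ℕ) :
    riemannSum Ξ τ (m * r) = ∑ q ∈ range m, riemannSum Ξ (fun i => τ (q * r + i)) r := by
  induction m with
  | zero => rw [zero_mul, sum_range_zero, riemannSum, sum_range_zero]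
  | succ m ih => rw [Nat.succ_mul, riemannSum_add, ih, sum_range_succ]

variable [NormedAddCommGroup V] {Ξ : ℝ → ℝ → V}

/-- The integrand `Ξ` is additive up to an error `C * ω ^ θ`: the hypothesis of the sewing
lemma. -/
def IsAlmostAdditive (T θ C : ℝ) (ω : ℝ → ℝ → ℝ) (Ξ : ℝ → ℝ → V) : Prop :=
  ∀ ⦃s t u⦄, 0 ≤ s → s ≤ t → t ≤ u → u ≤ T → ‖Ξ s u - Ξ s t - Ξ t u‖ ≤ C * ω s u ^ θ

theorem IsAlmostAdditive.self_eq_zero (hΞ : IsAlmostAdditive T θ C ω Ξ) (hω : IsControl T ω)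
    (hθ : θ ≠ 0) {s : ℝ} (hs : 0 ≤ s) (hsT : s ≤ T) : Ξ s s = 0 := by
  have h := hΞ hs le_rfl le_rfl hsT
  rw [hω.zero hs hsT, Real.zero_rpow hθ, mul_zero, sub_self, zero_sub, norm_neg] at h
  exact norm_le_zero_iff.1 h

theorem exists_young_const (hθ : 1 < θ) (hC : 0 ≤ C) :
    ∃ K, 0 ≤ K ∧ 2 * (1 / 2) ^ θ * K + 2 * C ≤ K := by
  have hpow : (1 / 2 : ℝ) ^ θ < 1 / 2 := by
    simpa only [Real.rpow_one] using
      Real.rpow_lt_rpow_of_exponent_gt (x := 1 / 2) (by norm_num) (by norm_num) hθ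
  have hden : 0 < 1 - 2 * (1 / 2 : ℝ) ^ θ := by linarith
  refine ⟨2 * C / (1 - 2 * (1 / 2) ^ θ), by positivity, le_of_eq ?_⟩
  field_simp
  ring

theorem IsAlmostAdditive.norm_add_add_sub_le (hΞ : IsAlmostAdditive T θ C ω Ξ) (hC : 0 ≤ C)
    (hθ : 0 ≤ θ) (hω : IsControl T ω) {a b c d : ℝ} (ha : 0 ≤ a) (hab : a ≤ b) (hbc : b ≤ c)
    (hcd : c ≤ d) (hd : d ≤ T) (L R : V) :
    ‖L + Ξ b c + R - Ξ a d‖ ≤ ‖L - Ξ a b‖ + ‖R - Ξ c d‖ + 2 * C * ω a d ^ θ := by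
  have hbd : C * ω b d ^ θ ≤ C * ω a d ^ θ := by
    have := hω.mono ha hab (hbc.trans hcd) le_rfl hd
    have := hω.nonneg (ha.trans hab) (hbc.trans hcd) hd
    gcongr
  have hsplit : L + Ξ b c + R - Ξ a d = (L - Ξ a b) + (R - Ξ c d)
      - ((Ξ a d - Ξ a b - Ξ b d) + (Ξ b d - Ξ b c - Ξ c d)) := by abel
  rw [hsplit]
  calc _ ≤ ‖L - Ξ a b‖ + ‖R - Ξ c d‖ +
        (‖Ξ a d - Ξ a b - Ξ b d‖ + ‖Ξ b d - Ξ b c - Ξ c d‖) :=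
        (norm_sub_le _ _).trans (add_le_add (norm_add_le _ _) (norm_add_le _ _))
    _ ≤ ‖L - Ξ a b‖ + ‖R - Ξ c d‖ + (C * ω a d ^ θ + C * ω a d ^ θ) := by
        gcongr
        · exact hΞ ha hab (hbc.trans hcd) hd
        · exact (hΞ (ha.trans hab) hbc hcd hd).trans hbd
    _ = _ := by ring

/-- Young's maximal inequality. Removing the one interval of the partition at which the control
is split in half leaves two partitions, each carrying at most half of the control. -/
theorem IsAlmostAdditive.norm_riemannSum_sub_le (hΞ : IsAlmostAdditive T θ C ω Ξ)
    (hω : IsControl T ω) (hθ : 0 < θ) (hC : 0 ≤ C) (hK : 0 ≤ K)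
    (hCK : 2 * (1 / 2) ^ θ * K + 2 * C ≤ K) {τ : ℕ → ℝ} (hτ : Monotone τ)
    (hτT : ∀ i, τ i ∈ Set.Icc 0 T) (n : ℕ) :
    ‖riemannSum Ξ τ n - Ξ (τ 0) (τ n)‖ ≤ K * ω (τ 0) (τ n) ^ θ := by
  induction n using Nat.strong_induction_on generalizing τ with
  | _ n ih =>
  have hω_nonneg {i j : ℕ} (hij : i ≤ j) : 0 ≤ ω (τ i) (τ j) :=
    hω.nonneg (hτT i).1 (hτ hij) (hτT j).2
  obtain rfl | hn := n.eq_zero_or_pos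
  · rw [riemannSum, sum_range_zero, hΞ.self_eq_zero hω hθ.ne' (hτT 0).1 (hτT 0).2, sub_zero,
      norm_zero]
    have := hω_nonneg (le_refl 0)
    positivity
  obtain ⟨j, hj, hleft, hright⟩ := hω.exists_le_half hτ hτT hn
  obtain ⟨m, rfl⟩ := Nat.exists_eq_add_of_lt hj
  rw [show j + m + 1 = j + 1 + m by omega] at *
  have hhalf {r : ℝ} (hr : 0 ≤ r) (hr' : r ≤ ω (τ 0) (τ (j + 1 + m)) / 2) :
      K * r ^ θ ≤ K * ((1 / 2) ^ θ * ω (τ 0) (τ (j + 1 + m)) ^ θ) := by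
    rw [← Real.mul_rpow (by norm_num) (hω_nonneg (Nat.zero_le _))]
    gcongr
    linarith
  have hshift : Monotone fun i => τ (j + 1 + i) := fun a b hab => hτ (by omega)
  rw [riemannSum_add, riemannSum_succ]
  refine (hΞ.norm_add_add_sub_le hC hθ.le hω (hτT 0).1 (hτ j.zero_le) (hτ j.le_succ)
    (hτ (Nat.le_add_right _ m)) (hτT _).2 _ _).trans ?_
  have hL := (ih j (by omega) hτ hτT).trans (hhalf (hω_nonneg j.zero_le) hleft)
  have hR := (ih m (by omega) hshift fun i => hτT _).trans
    (hhalf (hω_nonneg (Nat.le_add_right _ m)) hright)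
  have hpow : 0 ≤ ω (τ 0) (τ (j + 1 + m)) ^ θ := Real.rpow_nonneg (hω_nonneg (Nat.zero_le _)) θ
  calc _ ≤ K * ((1 / 2) ^ θ * ω (τ 0) (τ (j + 1 + m)) ^ θ)
        + K * ((1 / 2) ^ θ * ω (τ 0) (τ (j + 1 + m)) ^ θ)
        + 2 * C * ω (τ 0) (τ (j + 1 + m)) ^ θ := by gcongr
    _ = (2 * (1 / 2) ^ θ * K + 2 * C) * ω (τ 0) (τ (j + 1 + m)) ^ θ := by ring
    _ ≤ K * ω (τ 0) (τ (j + 1 + m)) ^ θ := mul_le_mul_of_nonneg_right hCK hpow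

theorem IsAlmostAdditive.norm_sub_min_add_max_le (hΞ : IsAlmostAdditive T θ C ω Ξ)
    (hω : IsControl T ω) (hθ : θ ≠ 0) (hC : 0 ≤ C) {a b t : ℝ} (ha : 0 ≤ a) (hab : a ≤ b)
    (hb : b ≤ T) (ht : t ∈ Set.Icc 0 T) :
    ‖Ξ a b - (Ξ (min a t) (min b t) + Ξ (max a t) (max b t))‖ ≤ C * ω a b ^ θ := by
  have htt : Ξ t t = 0 := hΞ.self_eq_zero hω hθ ht.1 ht.2
  have hnonneg : 0 ≤ C * ω a b ^ θ := mul_nonneg hC (Real.rpow_nonneg (hω.nonneg ha hab hb) θ)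
  rcases le_total b t with hbt | htb
  · rw [min_eq_left (hab.trans hbt), min_eq_left hbt, max_eq_right (hab.trans hbt),
      max_eq_right hbt, htt, add_zero, sub_self, norm_zero]
    exact hnonneg
  rcases le_total a t with hat | hta
  · rw [min_eq_left hat, min_eq_right htb, max_eq_right hat, max_eq_left htb, ← sub_sub]
    exact hΞ ha hat htb hb
  · rw [min_eq_right hta, min_eq_right htb, max_eq_left hta, max_eq_left htb, htt, zero_add,
      sub_self, norm_zero]
    exact hnonneg

section Dyadic

variable {s t u : ℝ}

theorem IsAlmostAdditive.norm_riemannSum_dyadicPartition_sub_le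
    (hΞ : IsAlmostAdditive T θ C ω Ξ) (hω : IsControl T ω) (hθ : 0 < θ) (hC : 0 ≤ C)
    (hK : 0 ≤ K) (hCK : 2 * (1 / 2) ^ θ * K + 2 * C ≤ K) (hs : 0 ≤ s) (hst : s ≤ t) (ht : t ≤ T)
    (n k : ℕ) :
    ‖riemannSum Ξ (dyadicPartition T s t (n + k)) (2 ^ (n + k))
      - riemannSum Ξ (dyadicPartition T s t n) (2 ^ n)‖ ≤
      K * ∑ i ∈ range (2 ^ n),
        ω (dyadicPartition T s t n i) (dyadicPartition T s t n (i + 1)) ^ θ := by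
  have hmono := dyadicPartition_mono (hs.trans (hst.trans ht)) s t (n + k)
  rw [pow_add, riemannSum_mul, riemannSum, ← sum_sub_distrib, mul_sum]
  refine norm_sum_le_of_le _ fun q _ => ?_
  have hblock := hΞ.norm_riemannSum_sub_le hω hθ hC hK hCK
    (τ := fun i => dyadicPartition T s t (n + k) (q * 2 ^ k + i))
    (fun i j hij => hmono (Nat.add_le_add_left hij _))
    (fun i => dyadicPartition_mem_Icc_zero hs hst ht _ _) (2 ^ k)
  simpa only [add_zero, ← Nat.succ_mul, Nat.succ_eq_add_one, dyadicPartition_mul_two_pow]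
    using hblock

theorem IsAlmostAdditive.norm_riemannSum_sub_add_le (hΞ : IsAlmostAdditive T θ C ω Ξ)
    (hω : IsControl T ω) (hθ : θ ≠ 0) (hC : 0 ≤ C) (hs : 0 ≤ s) (hst : s ≤ t) (htu : t ≤ u)
    (hu : u ≤ T) (n : ℕ) :
    ‖riemannSum Ξ (dyadicPartition T s u n) (2 ^ n)
      - (riemannSum Ξ (dyadicPartition T s t n) (2 ^ n)
        + riemannSum Ξ (dyadicPartition T t u n) (2 ^ n))‖ ≤
      C * ∑ i ∈ range (2 ^ n),
        ω (dyadicPartition T s u n i) (dyadicPartition T s u n (i + 1)) ^ θ := by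
  have hmem := dyadicPartition_mem_Icc_zero hs (hst.trans htu) hu n
  have hmono := dyadicPartition_mono (hs.trans (hst.trans (htu.trans hu))) s u n
  simp only [riemannSum, dyadicPartition_left T hst htu, dyadicPartition_right (u := u) T hst]
  rw [← sum_add_distrib, ← sum_sub_distrib, mul_sum]
  exact norm_sum_le_of_le _ fun i _ => hΞ.norm_sub_min_add_max_le hω hθ hC (hmem i).1
    (hmono i.le_succ) (hmem (i + 1)).2 ⟨hs.trans hst, htu.trans hu⟩

theorem IsAlmostAdditive.exists_tendsto_riemannSum [CompleteSpace V]
    (hΞ : IsAlmostAdditive T θ C ω Ξ) (hω : IsControl T ω) (hθ : 1 < θ) (hC : 0 ≤ C)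
    (hs : 0 ≤ s) (hst : s ≤ t) (ht : t ≤ T) :
    ∃ L, Tendsto (fun n => riemannSum Ξ (dyadicPartition T s t n) (2 ^ n)) atTop (𝓝 L) := by
  obtain ⟨K, hK, hCK⟩ := exists_young_const hθ hC
  have hsmall := (hω.tendsto_sum_rpow hθ hs hst ht).const_mul K
  rw [mul_zero] at hsmall
  refine cauchySeq_tendsto_of_complete (cauchySeq_of_le_tendsto_0' _ (fun n m hnm => ?_) hsmall)
  obtain ⟨k, rfl⟩ := Nat.exists_eq_add_of_le hnm
  rw [dist_comm, dist_eq_norm]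
  exact hΞ.norm_riemannSum_dyadicPartition_sub_le hω (by linarith) hC hK hCK hs hst ht n k

end Dyadic

theorem IsAlmostAdditive.exists_sewing [CompleteSpace V] (hΞ : IsAlmostAdditive T θ C ω Ξ)
    (hω : IsControl T ω) (hθ : 1 < θ) (hC : 0 ≤ C) :
    ∃ z : ℝ → V, z 0 = 0 ∧ ∃ K, ∀ ⦃s t⦄, 0 ≤ s → s ≤ t → t ≤ T →
      ‖z t - z s - Ξ s t‖ ≤ K * ω s t ^ θ := by
  have hθ₀ : 0 < θ := by linarith
  obtain ⟨K, hK, hCK⟩ := exists_young_const hθ hC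
  choose! I hI using fun s t hs hst ht =>
    hΞ.exists_tendsto_riemannSum (s := s) (t := t) hω hθ hC hs hst ht
  have hadd {s t u : ℝ} (hs : 0 ≤ s) (hst : s ≤ t) (htu : t ≤ u) (hu : u ≤ T) :
      I s u = I s t + I t u := by
    have hsmall := (hω.tendsto_sum_rpow hθ hs (hst.trans htu) hu).const_mul C
    rw [mul_zero] at hsmall
    have hzero := squeeze_zero_norm
      (hΞ.norm_riemannSum_sub_add_le hω hθ₀.ne' hC hs hst htu hu) hsmall
    refine sub_eq_zero.1 (tendsto_nhds_unique ?_ hzero)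
    exact (hI s u hs (hst.trans htu) hu).sub
      ((hI s t hs hst (htu.trans hu)).add (hI t u (hs.trans hst) htu hu))
  refine ⟨fun t => I 0 t - I 0 0, sub_self _, K, fun s t hs hst ht => ?_⟩
  beta_reduce
  rw [hadd le_rfl hs hst ht, sub_sub_sub_cancel_right, add_sub_cancel_left]
  refine le_of_tendsto ((hI s t hs hst ht).sub_const (Ξ s t)).norm (.of_forall fun n => ?_)
  have hmax := hΞ.norm_riemannSum_sub_le hω hθ₀ hC hK hCK
    (dyadicPartition_mono (hs.trans (hst.trans ht)) s t n)
    (dyadicPartition_mem_Icc_zero hs hst ht n) (2 ^ n)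
  rwa [dyadicPartition_zero hs hst, dyadicPartition_two_pow hst ht] at hmax

theorem IsControl.eq_of_norm_sub_le_rpow (hω : IsControl T ω) (hθ : 1 < θ) {f : ℝ → V}
    (hf : ∀ ⦃s t⦄, 0 ≤ s → s ≤ t → t ≤ T → ‖f t - f s‖ ≤ C * ω s t ^ θ) {s t : ℝ} (hs : 0 ≤ s)
    (hst : s ≤ t) (ht : t ≤ T) : f t = f s := by
  have hmem := dyadicPartition_mem_Icc_zero hs hst ht
  have hmono := dyadicPartition_mono (hs.trans (hst.trans ht)) s t
  have hbound (n : ℕ) : ‖f t - f s‖ ≤ C * ∑ i ∈ range (2 ^ n),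
      ω (dyadicPartition T s t n i) (dyadicPartition T s t n (i + 1)) ^ θ := by
    calc ‖f t - f s‖ = ‖∑ i ∈ range (2 ^ n),
          (f (dyadicPartition T s t n (i + 1)) - f (dyadicPartition T s t n i))‖ := by
          rw [sum_range_sub fun i => f (dyadicPartition T s t n i),
            dyadicPartition_zero hs hst, dyadicPartition_two_pow hst ht]
      _ ≤ _ := by
          rw [mul_sum]
          exact norm_sum_le_of_le _ fun i _ =>
            hf (hmem n i).1 (hmono n i.le_succ) (hmem n (i + 1)).2
  have hsmall := (hω.tendsto_sum_rpow hθ hs hst ht).const_mul C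
  rw [mul_zero] at hsmall
  exact sub_eq_zero.1 (norm_le_zero_iff.1 (ge_of_tendsto' hsmall hbound))

end Sewing

/-! ### Taylor expansion in the second variable -/

section ConvexHull

variable {E : Type*} [NormedAddCommGroup E] [NormedSpace ℝ E]

theorem isCompact_convexJoin {A B : Set E} (hA : IsCompact A) (hB : IsCompact B) :
    IsCompact (convexJoin ℝ A B) := by
  have himage : convexJoin ℝ A B =
      (fun q : E × E × ℝ => AffineMap.lineMap q.1 q.2.1 q.2.2) '' A ×ˢ B ×ˢ Set.Icc (0 : ℝ) 1 := by
    ext z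
    simp only [mem_convexJoin, segment_eq_image_lineMap, Set.mem_image, Set.mem_prod, Prod.exists]
    exact ⟨fun ⟨a, ha, b, hb, c, hc, hz⟩ => ⟨a, b, c, ⟨ha, hb, hc⟩, hz⟩,
      fun ⟨a, b, c, ⟨ha, hb, hc⟩, hz⟩ => ⟨a, ha, b, hb, c, hc, hz⟩⟩
  rw [himage]
  refine (hA.prod (hB.prod isCompact_Icc)).image ?_
  simp only [AffineMap.lineMap_apply_module]
  fun_prop

theorem convexHull_eq_biUnion_convexJoin_iterate [FiniteDimensional ℝ E] (Q : Set E) :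
    convexHull ℝ Q = ⋃ n ∈ Set.Iic (Module.finrank ℝ E + 1), (convexJoin ℝ Q)^[n] Q := by
  have hmin (n : ℕ) : (convexJoin ℝ Q)^[n] Q ⊆ convexHull ℝ Q := by
    induction n with
    | zero => exact subset_convexHull ℝ Q
    | succ n ih =>
      rw [Function.iterate_succ_apply']
      exact convexJoin_subset (subset_convexHull ℝ Q) ih (convex_convexHull ℝ Q)
  have hfinset (t : Finset E) (ht : t.Nonempty) (htQ : (t : Set E) ⊆ Q) :
      convexHull ℝ (t : Set E) ⊆ (convexJoin ℝ Q)^[t.card] Q := by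
    induction ht using Finset.Nonempty.cons_induction with
    | singleton a =>
      have ha : {a} ⊆ Q := by simpa only [Finset.coe_singleton] using htQ
      rw [Finset.coe_singleton, convexHull_singleton, Finset.card_singleton]
      exact ha.trans (subset_convexJoin_right ⟨a, ha rfl⟩)
    | cons a t hat ht ih =>
      rw [Finset.coe_cons, Set.insert_subset_iff] at htQ
      rw [Finset.coe_cons, convexHull_insert (Finset.coe_nonempty.2 ht), Finset.card_cons,
        Function.iterate_succ_apply']
      exact convexJoin_mono (Set.singleton_subset_iff.2 htQ.1) (ih htQ.2)
  refine Set.Subset.antisymm ?_ (Set.iUnion₂_subset fun n _ => hmin n)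
  rw [convexHull_eq_union]
  refine Set.iUnion_subset fun t => Set.iUnion₂_subset fun htQ ht => ?_
  obtain rfl | hne := t.eq_empty_or_nonempty
  · simp
  have hcard : t.card ≤ Module.finrank ℝ E + 1 := by
    have h := ht.card_le_finrank_succ
    rw [Fintype.card_coe] at h
    exact h.trans (Nat.succ_le_succ (Submodule.finrank_le _))
  exact (hfinset t hne htQ).trans (Set.subset_biUnion_of_mem (u := fun n => (convexJoin ℝ Q)^[n] Q)
    hcard)

theorem isCompact_convexHull [FiniteDimensional ℝ E] {Q : Set E} (hQ : IsCompact Q) :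
    IsCompact (convexHull ℝ Q) := by
  rw [convexHull_eq_biUnion_convexJoin_iterate]
  exact (Set.finite_Iic _).isCompact_biUnion fun n _ =>
    Function.Iterate.rec IsCompact hQ (fun _ => isCompact_convexJoin hQ) n

end ConvexHull

section Taylor

variable {E F G : Type*} [NormedAddCommGroup E] [NormedSpace ℝ E] [NormedAddCommGroup F]
  [NormedSpace ℝ F] [NormedAddCommGroup G] [NormedSpace ℝ G]

theorem norm_sub_sub_fderiv_le_sq {s : Set G} {f : G → F} {f' : G → G →L[ℝ] F} {C : ℝ} {w w' : G}
    (hs : Convex ℝ s) (hC : 0 ≤ C) (hf : ∀ z ∈ s, HasFDerivAt f (f' z) z)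
    (hf' : ∀ z ∈ s, ‖f' z - f' w‖ ≤ C * ‖z - w‖) (hw : w ∈ s) (hw' : w' ∈ s) :
    ‖f w' - f w - f' w (w' - w)‖ ≤ C * ‖w' - w‖ ^ 2 := by
  have hseg : segment ℝ w w' ⊆ s := hs.segment_subset hw hw'
  calc ‖f w' - f w - f' w (w' - w)‖ ≤ C * ‖w' - w‖ * ‖w' - w‖ :=
        (convex_segment w w').norm_image_sub_le_of_norm_hasFDerivWithin_le'
          (fun z hz => (hf z (hseg hz)).hasFDerivWithinAt)
          (fun z hz => (hf' z (hseg hz)).trans (by gcongr; exact norm_sub_le_of_mem_segment hz))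
          (left_mem_segment ℝ w w') (right_mem_segment ℝ w w')
    _ = C * ‖w' - w‖ ^ 2 := by ring

theorem exists_norm_sub_le_of_contDiffOn {D S : Set E} {f : E → F} (hD : IsOpen D)
    (hf : ContDiffOn ℝ 1 f D) (hS : IsCompact S) (hSD : S ⊆ D) :
    ∃ C, 0 ≤ C ∧ ∀ a ∈ S, ∀ b ∈ S, ‖f a - f b‖ ≤ C * ‖a - b‖ := by
  have hlocal : LocallyLipschitzOn S f := fun a ha => by
    obtain ⟨C, t, ht, hC⟩ := (hf.contDiffAt (hD.mem_nhds (hSD ha))).exists_lipschitzOnWith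
    exact ⟨C, t, mem_nhdsWithin_of_mem_nhds ht, hC⟩
  obtain ⟨C, hC⟩ := hlocal.exists_lipschitzOnWith_of_compact hS
  exact ⟨C, C.2, fun a ha b hb => lipschitzOnWith_iff_norm_sub_le.1 hC ha hb⟩

/-- The partial derivative `D₂H` of `H` in its second variable. -/
def partialSnd (H : E × G → F) (q : E × G) : G →L[ℝ] F := fderiv ℝ (fun z => H (q.1, z)) q.2

variable {D : Set (E × G)} {H : E × G → F} {K : Set E} {L : Set G}

theorem hasFDerivAt_comp_prodMk {q : E × G} (hH : DifferentiableAt ℝ H q) :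
    HasFDerivAt (fun z => H (q.1, z)) ((fderiv ℝ H q).comp (.inr ℝ E G)) q.2 :=
  hH.hasFDerivAt.comp q.2 (hasFDerivAt_prodMk_right q.1 q.2)

theorem partialSnd_eq_fderiv_comp {q : E × G} (hH : DifferentiableAt ℝ H q) :
    partialSnd H q = (fderiv ℝ H q).comp (.inr ℝ E G) :=
  (hasFDerivAt_comp_prodMk hH).fderiv

theorem hasFDerivAt_partialSnd (hD : IsOpen D) (hH : ContDiffOn ℝ 1 H D) {m : E} {w : G}
    (h : (m, w) ∈ D) : HasFDerivAt (fun z => H (m, z)) (partialSnd H (m, w)) w := by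
  have hdiff := (hH.differentiableOn one_ne_zero).differentiableAt (hD.mem_nhds h)
  exact partialSnd_eq_fderiv_comp hdiff ▸ hasFDerivAt_comp_prodMk hdiff

theorem contDiffOn_partialSnd {m n : WithTop ℕ∞} (hD : IsOpen D) (hH : ContDiffOn ℝ n H D)
    (hmn : m + 1 ≤ n) : ContDiffOn ℝ m (partialSnd H) D := by
  have hn : n ≠ 0 := by
    rintro rfl
    simp at hmn
  refine ((hH.fderiv_of_isOpen hD hmn).clm_comp
    (contDiffOn_const (c := ContinuousLinearMap.inr ℝ E G))).congr fun q hq => ?_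
  exact partialSnd_eq_fderiv_comp ((hH.differentiableOn hn).differentiableAt (hD.mem_nhds hq))

theorem exists_taylor_snd (hD : IsOpen D) (hH : ContDiffOn ℝ 2 H D) (hK : IsCompact K)
    (hL : IsCompact L) (hLconv : Convex ℝ L) (hKL : K ×ˢ L ⊆ D) :
    ∃ C, 0 ≤ C ∧ ∀ m ∈ K, ∀ w ∈ L, ∀ w' ∈ L,
      ‖H (m, w') - H (m, w) - partialSnd H (m, w) (w' - w)‖ ≤ C * ‖w' - w‖ ^ 2 := by
  obtain ⟨C, hC, hlip⟩ := exists_norm_sub_le_of_contDiffOn hD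
    (contDiffOn_partialSnd hD hH one_add_one_eq_two.le) (hK.prod hL) hKL
  refine ⟨C, hC, fun m hm w hw w' hw' => ?_⟩
  refine norm_sub_sub_fderiv_le_sq (f := fun z => H (m, z)) (f' := fun z => partialSnd H (m, z))
    hLconv hC (fun z hz => ?_) (fun z hz => ?_) hw hw'
  · exact hasFDerivAt_partialSnd hD (hH.of_le one_le_two) (hKL ⟨hm, hz⟩)
  · simpa [Prod.norm_def] using hlip (m, z) ⟨hm, hz⟩ (m, w) ⟨hm, hw⟩

theorem exists_norm_sub_sub_le (hD : IsOpen D) (hH : ContDiffOn ℝ 2 H D) (hK : IsCompact K)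
    (hL : IsCompact L) (hLconv : Convex ℝ L) (hKL : K ×ˢ L ⊆ D) :
    ∃ C, 0 ≤ C ∧ ∀ m ∈ K, ∀ n ∈ K, ∀ w ∈ L, ∀ w' ∈ L,
      ‖H (m, w') - H (n, w') - (H (m, w) - H (n, w))‖ ≤ C * ‖m - n‖ * ‖w' - w‖ := by
  obtain ⟨C, hC, hlip⟩ := exists_norm_sub_le_of_contDiffOn hD
    (contDiffOn_partialSnd hD hH one_add_one_eq_two.le) (hK.prod hL) hKL
  have hderiv {m z} (hm : m ∈ K) (hz : z ∈ L) :=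
    hasFDerivAt_partialSnd hD (hH.of_le one_le_two) (hKL ⟨hm, hz⟩)
  refine ⟨C, hC, fun m hm n hn w hw w' hw' => ?_⟩
  refine hLconv.norm_image_sub_le_of_norm_hasFDerivWithin_le (f := fun z => H (m, z) - H (n, z))
    (fun z hz => ((hderiv hm hz).sub (hderiv hn hz)).hasFDerivWithinAt) (fun z hz => ?_) hw hw'
  simpa [Prod.norm_def] using hlip (m, z) ⟨hm, hz⟩ (n, z) ⟨hn, hz⟩

theorem exists_taylor_sub_snd (hD : IsOpen D) (hH : ContDiffOn ℝ 3 H D) (hK : IsCompact K)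
    (hL : IsCompact L) (hLconv : Convex ℝ L) (hKL : K ×ˢ L ⊆ D) :
    ∃ C, 0 ≤ C ∧ ∀ m ∈ K, ∀ n ∈ K, ∀ w ∈ L, ∀ w' ∈ L,
      ‖H (m, w') - H (n, w') - (H (m, w) - H (n, w))
        - (partialSnd H (m, w) - partialSnd H (n, w)) (w' - w)‖ ≤
      C * ‖m - n‖ * ‖w' - w‖ ^ 2 := by
  obtain ⟨C, hC, hlip⟩ := exists_norm_sub_sub_le hD
    (contDiffOn_partialSnd hD hH (m := 2) (by norm_num)) hK hL hLconv hKL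
  have hderiv {m z} (hm : m ∈ K) (hz : z ∈ L) :=
    hasFDerivAt_partialSnd hD (hH.of_le (by norm_num)) (hKL ⟨hm, hz⟩)
  refine ⟨C, hC, fun m hm n hn w hw w' hw' => ?_⟩
  exact norm_sub_sub_fderiv_le_sq (f := fun z => H (m, z) - H (n, z))
    (f' := fun z => partialSnd H (m, z) - partialSnd H (n, z)) hLconv (by positivity)
    (fun z hz => (hderiv hm hz).sub (hderiv hn hz)) (fun z hz => hlip m hm n hn w hw z hz) hw hw'

end Taylor

/-! ### Orders of magnitude with respect to a control -/

section HasOrder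

open Asymptotics Filter

variable {ι : Type*} {F G H : Type*} [NormedAddCommGroup F] [NormedAddCommGroup G]
  [NormedAddCommGroup H] {S : Set ι} {e : ι → ℝ} {m n : ℕ}

/-- `f = O(e ^ n)` uniformly on `S`: the bookkeeping device for the expansions below, where `e` is
the scale `ω ^ (1 / p)`, so that a remainder of order `n` is `O(ω ^ (n / p))`. -/
def HasOrder (S : Set ι) (e : ι → ℝ) (n : ℕ) (f : ι → F) : Prop := f =O[𝓟 S] fun i => e i ^ n

theorem HasOrder.of_bound {f : ι → F} (C : ℝ) (h : ∀ i ∈ S, ‖f i‖ ≤ C * e i ^ n) :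
    HasOrder S e n f :=
  isBigO_principal.2 ⟨|C|, fun i hi => (h i hi).trans
    ((le_abs_self _).trans_eq (by rw [abs_mul, Real.norm_eq_abs]))⟩

theorem HasOrder.exists_bound {f : ι → F} (hf : HasOrder S e n f) (he : ∀ i ∈ S, 0 ≤ e i) :
    ∃ C, 0 ≤ C ∧ ∀ i ∈ S, ‖f i‖ ≤ C * e i ^ n := by
  obtain ⟨C, hC, hbound⟩ := IsBigO.exists_nonneg hf
  refine ⟨C, hC, fun i hi => ?_⟩
  simpa only [Real.norm_of_nonneg (pow_nonneg (he i hi) n)] using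
    isBigOWith_principal.1 hbound i hi

theorem HasOrder.congr {f g : ι → F} (hf : HasOrder S e n f) (h : ∀ i ∈ S, f i = g i) :
    HasOrder S e n g :=
  IsBigO.congr' hf (eventually_principal.2 h) .rfl

theorem HasOrder.add {f g : ι → F} (hf : HasOrder S e n f) (hg : HasOrder S e n g) :
    HasOrder S e n fun i => f i + g i :=
  IsBigO.add hf hg

theorem HasOrder.sub {f g : ι → F} (hf : HasOrder S e n f) (hg : HasOrder S e n g) :
    HasOrder S e n fun i => f i - g i :=
  IsBigO.sub hf hg

theorem HasOrder.sum {κ : Type*} {s : Finset κ} {f : κ → ι → F}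
    (hf : ∀ j ∈ s, HasOrder S e n (f j)) : HasOrder S e n fun i => ∑ j ∈ s, f j i := by
  simpa only [HasOrder, ← Finset.sum_apply] using IsBigO.sum hf

theorem HasOrder.norm {f : ι → F} (hf : HasOrder S e n f) : HasOrder S e n fun i => ‖f i‖ :=
  IsBigO.norm_left hf

theorem HasOrder.mul {a b : ι → ℝ} (ha : HasOrder S e m a) (hb : HasOrder S e n b) :
    HasOrder S e (m + n) fun i => a i * b i := by
  simpa only [HasOrder, pow_add] using IsBigO.mul ha hb

theorem HasOrder.of_norm_le {f : ι → F} {g : ι → ℝ} (hg : HasOrder S e n g) (C : ℝ)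
    (h : ∀ i ∈ S, ‖f i‖ ≤ C * g i) : HasOrder S e n f :=
  have hfg : f =O[𝓟 S] g := isBigO_principal.2 ⟨|C|, fun i hi => (h i hi).trans
    ((le_abs_self _).trans_eq (by rw [abs_mul, Real.norm_eq_abs]))⟩
  hfg.trans hg

theorem HasOrder.of_succ {f : ι → F} (hf : HasOrder S e (n + 1) f) (he : HasOrder S e 0 e) :
    HasOrder S e n f :=
  IsBigO.trans hf (by simpa only [HasOrder, pow_succ, pow_zero, mul_one] using
    (isBigO_refl (fun i => e i ^ n) (𝓟 S)).mul he)

variable [NormedSpace ℝ F] [NormedSpace ℝ G]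

theorem HasOrder.smul {a : ι → ℝ} {f : ι → F} (ha : HasOrder S e m a) (hf : HasOrder S e n f) :
    HasOrder S e (m + n) fun i => a i • f i :=
  (ha.norm.mul hf.norm).of_norm_le 1 fun i _ => by rw [one_mul, norm_smul]

theorem HasOrder.app {A : ι → F →L[ℝ] G} {f : ι → F} (hA : HasOrder S e m A)
    (hf : HasOrder S e n f) : HasOrder S e (m + n) fun i => A i (f i) :=
  (hA.norm.mul hf.norm).of_norm_le 1 fun i _ => by rw [one_mul]; exact (A i).le_opNorm _

theorem HasOrder.comp [NormedSpace ℝ H] {A : ι → F →L[ℝ] G} {B : ι → H →L[ℝ] F}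
    (hA : HasOrder S e m A) (hB : HasOrder S e n B) :
    HasOrder S e (m + n) fun i => (A i).comp (B i) :=
  (hA.norm.mul hB.norm).of_norm_le 1 fun i _ => by rw [one_mul]; exact (A i).opNorm_comp_le _

end HasOrder

section Simplex

variable {T p : ℝ} {ω : ℝ → ℝ → ℝ} {F G : Type*} [NormedAddCommGroup F] [NormedAddCommGroup G]
  {n : ℕ}

/-- The pairs `0 ≤ s ≤ t ≤ T`. -/
def simplex₂ (T : ℝ) : Set (ℝ × ℝ) := {q | 0 ≤ q.1 ∧ q.1 ≤ q.2 ∧ q.2 ≤ T}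

/-- The triples `0 ≤ s ≤ t ≤ u ≤ T`. -/
def simplex₃ (T : ℝ) : Set (ℝ × ℝ × ℝ) := {q | 0 ≤ q.1 ∧ q.1 ≤ q.2.1 ∧ q.2.1 ≤ q.2.2 ∧ q.2.2 ≤ T}

/-- `f s t = O(ω(s,t) ^ (n / p))` for `0 ≤ s ≤ t ≤ T`. -/
abbrev HasOrder₂ (T p : ℝ) (ω : ℝ → ℝ → ℝ) (n : ℕ) (f : ℝ → ℝ → F) : Prop :=
  HasOrder (simplex₂ T) (fun q => ω q.1 q.2 ^ (1 / p)) n fun q => f q.1 q.2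

/-- `f s t u = O(ω(s,u) ^ (n / p))` for `0 ≤ s ≤ t ≤ u ≤ T`. -/
abbrev HasOrder₃ (T p : ℝ) (ω : ℝ → ℝ → ℝ) (n : ℕ) (f : ℝ → ℝ → ℝ → F) : Prop :=
  HasOrder (simplex₃ T) (fun q => ω q.1 q.2.2 ^ (1 / p)) n fun q => f q.1 q.2.1 q.2.2

theorem rpow_one_div_pow {w : ℝ} (hw : 0 ≤ w) (p : ℝ) (n : ℕ) :
    (w ^ (1 / p)) ^ n = w ^ ((n : ℝ) / p) := by
  rw [← Real.rpow_mul_natCast hw, one_div_mul_eq_div]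

theorem IsControl.hasOrder₂_of_bound (hω : IsControl T ω) {f : ℝ → ℝ → F} (C : ℝ)
    (h : ∀ ⦃s t⦄, 0 ≤ s → s ≤ t → t ≤ T → ‖f s t‖ ≤ C * ω s t ^ ((n : ℝ) / p)) :
    HasOrder₂ T p ω n f :=
  .of_bound C fun q ⟨hs, hst, ht⟩ => by
    rw [rpow_one_div_pow (hω.nonneg hs hst ht)]
    exact h hs hst ht

theorem HasOrder₂.exists_bound (hω : IsControl T ω) {f : ℝ → ℝ → F} (hf : HasOrder₂ T p ω n f) :
    ∃ C, 0 ≤ C ∧ ∀ ⦃s t⦄, 0 ≤ s → s ≤ t → t ≤ T → ‖f s t‖ ≤ C * ω s t ^ ((n : ℝ) / p) := by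
  obtain ⟨C, hC, hbound⟩ := HasOrder.exists_bound hf fun q ⟨hs, hst, ht⟩ =>
    Real.rpow_nonneg (hω.nonneg hs hst ht) _
  refine ⟨C, hC, fun s t hs hst ht => ?_⟩
  rw [← rpow_one_div_pow (hω.nonneg hs hst ht)]
  exact hbound (s, t) ⟨hs, hst, ht⟩

theorem HasOrder₃.exists_isAlmostAdditive (hω : IsControl T ω) {Ξ : ℝ → ℝ → F}
    (hΞ : HasOrder₃ T p ω n fun s t u => Ξ s u - Ξ s t - Ξ t u) :
    ∃ C, 0 ≤ C ∧ IsAlmostAdditive T ((n : ℝ) / p) C ω Ξ := by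
  obtain ⟨C, hC, hbound⟩ := HasOrder.exists_bound hΞ fun q ⟨hs, hst, htu, hu⟩ =>
    Real.rpow_nonneg (hω.nonneg hs (hst.trans htu) hu) _
  refine ⟨C, hC, fun s t u hs hst htu hu => ?_⟩
  rw [← rpow_one_div_pow (hω.nonneg hs (hst.trans htu) hu)]
  exact hbound (s, t, u) ⟨hs, hst, htu, hu⟩

theorem IsControl.hasOrder₂_scale (hω : IsControl T ω) (hp : 0 < p) :
    HasOrder₂ T p ω 0 fun s t => ω s t ^ (1 / p) :=
  .of_bound (ω 0 T ^ (1 / p)) fun q ⟨hs, hst, ht⟩ => by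
    rw [Real.norm_of_nonneg (Real.rpow_nonneg (hω.nonneg hs hst ht) _), pow_zero, mul_one]
    have hnonneg := hω.nonneg hs hst ht
    gcongr
    exact hω.mono le_rfl hs hst ht le_rfl

theorem HasOrder₂.left (hω : IsControl T ω) (hp : 0 < p) {f : ℝ → ℝ → F}
    (hf : HasOrder₂ T p ω n f) : HasOrder₃ T p ω n fun s t _ => f s t := by
  obtain ⟨C, hC, hbound⟩ := hf.exists_bound hω
  refine .of_bound C fun q ⟨hs, hst, htu, hu⟩ => (hbound hs hst (htu.trans hu)).trans ?_
  have hnonneg := hω.nonneg hs hst (htu.trans hu)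
  rw [← rpow_one_div_pow hnonneg]
  gcongr
  exact hω.mono hs le_rfl hst htu hu

theorem HasOrder₂.right (hω : IsControl T ω) (hp : 0 < p) {f : ℝ → ℝ → F}
    (hf : HasOrder₂ T p ω n f) : HasOrder₃ T p ω n fun _ t u => f t u := by
  obtain ⟨C, hC, hbound⟩ := hf.exists_bound hω
  refine .of_bound C fun q ⟨hs, hst, htu, hu⟩ => (hbound (hs.trans hst) htu hu).trans ?_
  have hnonneg := hω.nonneg (hs.trans hst) htu hu
  rw [← rpow_one_div_pow hnonneg]
  gcongr
  exact hω.mono hs hst htu le_rfl hu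

theorem hasOrder₂_fst_of_continuousOn {f : ℝ → F} (hf : ContinuousOn f (Set.Icc 0 T)) :
    HasOrder₂ T p ω 0 fun s _ => f s := by
  obtain ⟨C, hC⟩ := isCompact_Icc.exists_bound_of_continuousOn hf
  refine .of_bound C fun q ⟨hs, hst, ht⟩ => ?_
  simpa only [pow_zero, mul_one] using hC q.1 ⟨hs, hst.trans ht⟩

theorem hasOrder₂_snd_of_continuousOn {f : ℝ → F} (hf : ContinuousOn f (Set.Icc 0 T)) :
    HasOrder₂ T p ω 0 fun _ t => f t := by
  obtain ⟨C, hC⟩ := isCompact_Icc.exists_bound_of_continuousOn hf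
  refine .of_bound C fun q ⟨hs, hst, ht⟩ => ?_
  simpa only [pow_zero, mul_one] using hC q.2 ⟨hs.trans hst, ht⟩

/-- `f` is `1 / p`-Hölder on `[0, T]` with respect to the control `ω`. -/
def IsHolder (T p : ℝ) (ω : ℝ → ℝ → ℝ) (f : ℝ → F) : Prop :=
  HasOrder₂ T p ω 1 fun s t => f t - f s

theorem IsHolder.of_bound (hω : IsControl T ω) {f : ℝ → F} (C : ℝ)
    (h : ∀ ⦃s t⦄, 0 ≤ s → s ≤ t → t ≤ T → ‖f t - f s‖ ≤ C * ω s t ^ (1 / p)) :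
    IsHolder T p ω f :=
  hω.hasOrder₂_of_bound (n := 1) (f := fun s t => f t - f s) C
    (by simpa only [Nat.cast_one] using h)

theorem IsHolder.exists_bound (hω : IsControl T ω) {f : ℝ → F} (hf : IsHolder T p ω f) :
    ∃ C, 0 ≤ C ∧ ∀ ⦃s t⦄, 0 ≤ s → s ≤ t → t ≤ T → ‖f t - f s‖ ≤ C * ω s t ^ (1 / p) := by
  simpa only [Nat.cast_one] using
    HasOrder₂.exists_bound (n := 1) (f := fun s t => f t - f s) hω hf

theorem IsHolder.continuousOn (hω : IsControl T ω) (hp : 0 < p) {f : ℝ → F}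
    (hf : IsHolder T p ω f) : ContinuousOn f (Set.Icc 0 T) := by
  obtain ⟨C, hC, hbound⟩ := hf.exists_bound hω
  refine Metric.continuousOn_iff.2 fun t ht ε hε => ?_
  obtain ⟨δ, hδ, hωδ⟩ := hω.exists_forall_lt (η := (ε / (C + 1)) ^ p) (by positivity)
  have hclose : ∀ s t, 0 ≤ s → s ≤ t → t ≤ T → t - s < δ → ‖f t - f s‖ < ε := by
    intro s t hs hst ht hδst
    have hscale : ω s t ^ (1 / p) < ε / (C + 1) := by
      rw [one_div, Real.rpow_inv_lt_iff_of_pos (hω.nonneg hs hst ht) (by positivity) hp]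
      exact hωδ s t hs hst ht hδst
    calc ‖f t - f s‖ ≤ C * ω s t ^ (1 / p) := hbound hs hst ht
      _ ≤ C * (ε / (C + 1)) := by gcongr
      _ < ε := by rw [mul_div_assoc', div_lt_iff₀ (by positivity)]; linarith
  refine ⟨δ, hδ, fun s hs hst => ?_⟩
  rw [Real.dist_eq, abs_sub_lt_iff] at hst
  rw [dist_eq_norm]
  obtain h | h := le_total s t
  · rw [norm_sub_rev]
    exact hclose s t hs.1 h ht.2 hst.2
  · exact hclose t s ht.1 h hs.2 hst.1

theorem IsHolder.hasOrder_fst (hω : IsControl T ω) (hp : 0 < p) {f : ℝ → F}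
    (hf : IsHolder T p ω f) : HasOrder₂ T p ω 0 fun s _ => f s :=
  hasOrder₂_fst_of_continuousOn (hf.continuousOn hω hp)

theorem IsHolder.hasOrder_snd (hω : IsControl T ω) (hp : 0 < p) {f : ℝ → F}
    (hf : IsHolder T p ω f) : HasOrder₂ T p ω 0 fun _ t => f t :=
  hasOrder₂_snd_of_continuousOn (hf.continuousOn hω hp)

theorem IsHolder.left (hω : IsControl T ω) (hp : 0 < p) {f : ℝ → F} (hf : IsHolder T p ω f) :
    HasOrder₃ T p ω 1 fun s t _ => f t - f s :=
  HasOrder₂.left (f := fun s t => f t - f s) hω hp hf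

theorem IsHolder.right (hω : IsControl T ω) (hp : 0 < p) {f : ℝ → F} (hf : IsHolder T p ω f) :
    HasOrder₃ T p ω 1 fun _ t u => f u - f t :=
  HasOrder₂.right (f := fun t u => f u - f t) hω hp hf

theorem IsHolder.const (c : F) : IsHolder T p ω fun _ => c :=
  HasOrder.of_bound 0 fun _ _ => by simp

theorem IsHolder.add {f g : ℝ → F} (hf : IsHolder T p ω f) (hg : IsHolder T p ω g) :
    IsHolder T p ω fun s => f s + g s :=
  (HasOrder.add hf hg).congr fun _ _ => (add_sub_add_comm _ _ _ _).symm

theorem IsHolder.sub {f g : ℝ → F} (hf : IsHolder T p ω f) (hg : IsHolder T p ω g) :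
    IsHolder T p ω fun s => f s - g s :=
  (HasOrder.sub hf hg).congr fun _ _ => sub_sub_sub_comm _ _ _ _

theorem IsHolder.of_norm_sub_le {f : ℝ → F} {g : ℝ → G} (hf : IsHolder T p ω f) (C : ℝ)
    (h : ∀ s ∈ Set.Icc 0 T, ∀ t ∈ Set.Icc 0 T, ‖g t - g s‖ ≤ C * ‖f t - f s‖) :
    IsHolder T p ω g :=
  (HasOrder.norm hf).of_norm_le C fun q ⟨hs, hst, ht⟩ =>
    h q.1 ⟨hs, hst.trans ht⟩ q.2 ⟨hs.trans hst, ht⟩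

variable [NormedSpace ℝ F] [NormedSpace ℝ G]

theorem IsHolder.app (hω : IsControl T ω) (hp : 0 < p) {A : ℝ → F →L[ℝ] G} {f : ℝ → F}
    (hA : IsHolder T p ω A) (hf : IsHolder T p ω f) : IsHolder T p ω fun s => A s (f s) :=
  ((HasOrder.app hA (hf.hasOrder_snd hω hp)).add ((hA.hasOrder_fst hω hp).app hf)).congr
    fun _ _ => by simp only [sub_apply, map_sub]; abel

theorem IsHolder.comp (hω : IsControl T ω) (hp : 0 < p) {H : Type*} [NormedAddCommGroup H]
    [NormedSpace ℝ H] {A : ℝ → F →L[ℝ] G} {B : ℝ → H →L[ℝ] F} (hA : IsHolder T p ω A)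
    (hB : IsHolder T p ω B) : IsHolder T p ω fun s => (A s).comp (B s) :=
  ((HasOrder.comp hA (hB.hasOrder_snd hω hp)).add ((hA.hasOrder_fst hω hp).comp hB)).congr
    fun _ _ => by simp only [ContinuousLinearMap.sub_comp, ContinuousLinearMap.comp_sub]; abel

end Simplex

/-! ### Rough paths and controlled paths -/

section ControlledPath

variable {T p : ℝ} {ω : ℝ → ℝ → ℝ} {k : ℕ} {x : ℝ → Euc k}

theorem IsRoughPath.isHolder (hω : IsControl T ω)
    {XX : ℝ → ℝ → EuclideanSpace ℝ (Fin k × Fin k)} (hX : IsRoughPath T p ω x XX) :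
    IsHolder T p ω x :=
  .of_bound hω 1 fun s t hs hst ht => by
    simpa only [one_mul] using hX.bound_x hs hst ht

theorem IsRoughPath.hasOrder_snd_level (hω : IsControl T ω)
    {XX : ℝ → ℝ → EuclideanSpace ℝ (Fin k × Fin k)} (hX : IsRoughPath T p ω x XX) :
    HasOrder₂ T p ω 2 XX :=
  hω.hasOrder₂_of_bound 1 fun s t hs hst ht => by
    simpa only [Nat.cast_ofNat, one_mul] using hX.bound_XX hs hst ht

variable {V : Type*} [NormedAddCommGroup V] [NormedSpace ℝ V] {y : ℝ → V} {y' : ℝ → Euc k →L[ℝ] V}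

theorem IsCRP.hasOrder_remainder (hω : IsControl T ω) (hy : IsCRP p ω x 0 T y y') :
    HasOrder₂ T p ω 2 fun s t => y t - y s - y' s (x t - x s) := by
  obtain ⟨-, -, C, hC⟩ := hy
  exact hω.hasOrder₂_of_bound C fun s t hs hst ht => (hC hs hst ht).1

theorem IsCRP.isHolder_deriv (hω : IsControl T ω) (hy : IsCRP p ω x 0 T y y') :
    IsHolder T p ω y' := by
  obtain ⟨-, -, C, hC⟩ := hy
  exact .of_bound hω C fun s t hs hst ht => (hC hs hst ht).2

theorem HasOrder₂.isHolder_of_remainder (hω : IsControl T ω) (hp : 0 < p) (hx : IsHolder T p ω x)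
    (hrem : HasOrder₂ T p ω 2 fun s t => y t - y s - y' s (x t - x s))
    (hy' : IsHolder T p ω y') : IsHolder T p ω y :=
  ((HasOrder.of_succ hrem (hω.hasOrder₂_scale hp)).add ((hy'.hasOrder_fst hω hp).app hx)).congr
    fun _ _ => sub_add_cancel _ _

theorem IsCRP.isHolder (hω : IsControl T ω) (hp : 0 < p) (hx : IsHolder T p ω x)
    (hy : IsCRP p ω x 0 T y y') : IsHolder T p ω y :=
  (hy.hasOrder_remainder hω).isHolder_of_remainder hω hp hx (hy.isHolder_deriv hω)

theorem IsCRP.of_hasOrder (hω : IsControl T ω) (hp : 0 < p) (hx : IsHolder T p ω x)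
    (hrem : HasOrder₂ T p ω 2 fun s t => y t - y s - y' s (x t - x s))
    (hy' : IsHolder T p ω y') : IsCRP p ω x 0 T y y' := by
  refine ⟨(hrem.isHolder_of_remainder hω hp hx hy').continuousOn hω hp, hy'.continuousOn hω hp, ?_⟩
  obtain ⟨C, -, hbound⟩ := hrem.exists_bound hω
  obtain ⟨C', -, hbound'⟩ := hy'.exists_bound hω
  refine ⟨max C C', fun s t hs hst ht => ?_⟩
  have hscale (a : ℝ) := Real.rpow_nonneg (hω.nonneg hs hst ht) a
  exact ⟨(hbound hs hst ht).trans (mul_le_mul_of_nonneg_right (le_max_left _ _) (hscale _)),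
    (hbound' hs hst ht).trans (mul_le_mul_of_nonneg_right (le_max_right _ _) (hscale _))⟩

end ControlledPath

section Tensor

variable {V : Type*} [NormedAddCommGroup V] [NormedSpace ℝ V] {n m : ℕ}

theorem tapply_add (B : Euc n → Euc m → V) (X Y : EuclideanSpace ℝ (Fin n × Fin m)) :
    tapply B (X + Y) = tapply B X + tapply B Y := by
  simp only [tapply, PiLp.add_apply, add_smul, Finset.sum_add_distrib]

theorem tapply_add_form (B B' : Euc n → Euc m → V) (X : EuclideanSpace ℝ (Fin n × Fin m)) :
    tapply (fun v w => B v w + B' v w) X = tapply B X + tapply B' X := by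
  simp only [tapply, smul_add, Finset.sum_add_distrib]

theorem tapply_sub_form (B B' : Euc n → Euc m → V) (X : EuclideanSpace ℝ (Fin n × Fin m)) :
    tapply (fun v w => B v w - B' v w) X = tapply B X - tapply B' X := by
  simp only [tapply, smul_sub, Finset.sum_sub_distrib]

theorem map_tapply {V' : Type*} [NormedAddCommGroup V'] [NormedSpace ℝ V'] (L : V →L[ℝ] V')
    (B : Euc n → Euc m → V) (X : EuclideanSpace ℝ (Fin n × Fin m)) :
    L (tapply B X) = tapply (fun v w => L (B v w)) X := by
  simp only [tapply, map_sum, map_smul]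

theorem sum_smul_eb (v : Euc n) : ∑ i, v i • eb i = v := by
  simpa [eb] using (EuclideanSpace.basisFun (Fin n) ℝ).sum_repr v

theorem tapply_tensorE (B : Euc n →L[ℝ] Euc m →L[ℝ] V) (v : Euc n) (w : Euc m) :
    tapply (fun v w => B v w) (tensorE v w) = B v w := by
  calc tapply (fun v w => B v w) (tensorE v w)
      = ∑ i, ∑ j, (v i * w j) • B (eb i) (eb j) := Fintype.sum_prod_type _
    _ = B (∑ i, v i • eb i) (∑ j, w j • eb j) := by
        rw [Finset.sum_comm]
        simp only [map_sum, map_smul, sum_apply, smul_apply, Finset.smul_sum, smul_smul, mul_comm]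
    _ = B v w := by rw [sum_smul_eb, sum_smul_eb]

theorem HasOrder.tapply {ι : Type*} {S : Set ι} {e : ι → ℝ} {a b : ℕ}
    {X : ι → EuclideanSpace ℝ (Fin n × Fin m)} {B : ι → Euc n → Euc m → V}
    (hX : HasOrder S e a X) (hB : ∀ v w, HasOrder S e b fun i => B i v w) :
    HasOrder S e (a + b) fun i => tapply (B i) (X i) := by
  have hcoord (j : Fin n × Fin m) : HasOrder S e a fun i => X i j :=
    hX.norm.of_norm_le 1 fun i _ => by rw [one_mul]; exact PiLp.norm_apply_le (X i) j
  exact .sum fun j _ => (hcoord j).smul (hB _ _)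

end Tensor

/-! ### Expansion of the gauge along a path -/

section GaugeBounds

variable {d : ℕ} {D : Set (Euc d × Euc d)} {ψ : Euc d × Euc d → Euc d}
  {U : Euc d × Euc d → Euc d →L[ℝ] Euc d} {K : Set (Euc d)}

theorem IsLocalGauge.contDiffOn_psi (hG : IsLocalGauge D ψ U) (n : ℕ) : ContDiffOn ℝ n ψ D :=
  hG.smooth_psi.of_le (by exact_mod_cast le_top)

theorem IsLocalGauge.contDiffOn_U (hG : IsLocalGauge D ψ U) (n : ℕ) : ContDiffOn ℝ n U D :=
  hG.smooth_U.of_le (by exact_mod_cast le_top)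

theorem IsLocalGauge.exists_norm_psi_sub_le (hG : IsLocalGauge D ψ U) (hK : IsCompact K)
    (hKconv : Convex ℝ K) (hKD : K ×ˢ K ⊆ D) :
    ∃ C, ∀ a ∈ K, ∀ b ∈ K, ‖ψ (a, b) - (b - a)‖ ≤ C * ‖b - a‖ ^ 2 := by
  obtain ⟨C, -, hC⟩ := exists_taylor_snd hG.open_dom (hG.contDiffOn_psi 2) hK hK hKconv hKD
  refine ⟨C, fun a ha b hb => ?_⟩
  have hderiv : partialSnd ψ (a, a) = .id ℝ (Euc d) := hG.diag_dpsi a (hKD ⟨ha, ha⟩)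
  have h := hC a ha a ha b hb
  rwa [hG.diag_psi a (hKD ⟨ha, ha⟩), sub_zero, hderiv] at h

theorem IsLocalGauge.exists_norm_U_sub_id_le (hG : IsLocalGauge D ψ U) (hK : IsCompact K)
    (hKconv : Convex ℝ K) (hKD : K ×ˢ K ⊆ D) :
    ∃ C, ∀ a ∈ K, ∀ b ∈ K,
      ‖U (b, a) - .id ℝ (Euc d) + partialSnd U (b, b) (b - a)‖ ≤ C * ‖b - a‖ ^ 2 := by
  obtain ⟨C, -, hC⟩ := exists_taylor_snd hG.open_dom (hG.contDiffOn_U 2) hK hK hKconv hKD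
  refine ⟨C, fun a ha b hb => ?_⟩
  have h := hC b hb b hb a ha
  rwa [hG.diag_U b (hKD ⟨hb, hb⟩), ← neg_sub b a, map_neg, sub_neg_eq_add, norm_neg] at h

theorem IsLocalGauge.exists_norm_psi_cocycle_le (hG : IsLocalGauge D ψ U) (hK : IsCompact K)
    (hKconv : Convex ℝ K) (hKD : K ×ˢ K ⊆ D) :
    ∃ C, ∀ a ∈ K, ∀ b ∈ K, ∀ c ∈ K,
      ‖ψ (a, c) - ψ (a, b) - ψ (b, c) - partialSnd (partialSnd ψ) (a, a) (b - a) (c - b)‖ ≤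
        C * (‖b - a‖ * ‖c - b‖ ^ 2 + ‖b - a‖ ^ 2 * ‖c - b‖) := by
  obtain ⟨C, _, htaylor⟩ :=
    exists_taylor_sub_snd hG.open_dom (hG.contDiffOn_psi 3) hK hK hKconv hKD
  obtain ⟨C', _, htaylor'⟩ := exists_taylor_snd hG.open_dom
    (contDiffOn_partialSnd hG.open_dom (hG.contDiffOn_psi 3) (m := 2) (by norm_num))
    hK hK hKconv hKD
  refine ⟨max C C', fun a ha b hb c hc => ?_⟩
  have hid (m : Euc d) (hm : m ∈ K) : partialSnd ψ (m, m) = .id ℝ (Euc d) :=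
    hG.diag_dpsi m (hKD ⟨hm, hm⟩)
  have h := htaylor a ha b hb b hb c hc
  have h' := htaylor' a ha a ha b hb
  rw [hG.diag_psi b (hKD ⟨hb, hb⟩), hid b hb, norm_sub_rev a b] at h
  rw [hid a ha] at h'
  calc ‖ψ (a, c) - ψ (a, b) - ψ (b, c) - partialSnd (partialSnd ψ) (a, a) (b - a) (c - b)‖
      = ‖(ψ (a, c) - ψ (b, c) - (ψ (a, b) - 0) - (partialSnd ψ (a, b) - .id ℝ (Euc d)) (c - b))
          + (partialSnd ψ (a, b) - .id ℝ (Euc d) - partialSnd (partialSnd ψ) (a, a) (b - a))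
            (c - b)‖ := by
        congr 1
        simp only [sub_apply]
        abel
    _ ≤ C * ‖b - a‖ * ‖c - b‖ ^ 2 + C' * ‖b - a‖ ^ 2 * ‖c - b‖ :=
        norm_add_le_of_le h (ContinuousLinearMap.le_of_opNorm_le _ h' _)
    _ ≤ max C C' * (‖b - a‖ * ‖c - b‖ ^ 2 + ‖b - a‖ ^ 2 * ‖c - b‖) := by
        rw [mul_add, ← mul_assoc, ← mul_assoc]
        gcongr
        · exact le_max_left _ _
        · exact le_max_right _ _

end GaugeBounds

section GaugePath

variable {T p : ℝ} {ω : ℝ → ℝ → ℝ}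

theorem IsHolder.comp_diag {E F : Type*} [NormedAddCommGroup E] [NormedSpace ℝ E]
    [NormedAddCommGroup F] [NormedSpace ℝ F] {D : Set (E × E)} {H : E × E → F} {K : Set E}
    {y : ℝ → E} (hD : IsOpen D) (hH : ContDiffOn ℝ 1 H D) (hK : IsCompact K) (hKD : K ×ˢ K ⊆ D)
    (hy : IsHolder T p ω y) (hyK : ∀ s ∈ Set.Icc 0 T, y s ∈ K) :
    IsHolder T p ω fun s => H (y s, y s) := by
  obtain ⟨C, -, hC⟩ := exists_norm_sub_le_of_contDiffOn hD hH (hK.prod hK) hKD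
  refine hy.of_norm_sub_le C fun s hs t ht => ?_
  simpa only [Prod.mk_sub_mk, Prod.norm_mk, max_self] using
    hC (y t, y t) ⟨hyK t ht, hyK t ht⟩ (y s, y s) ⟨hyK s hs, hyK s hs⟩

variable {d : ℕ} {D : Set (Euc d × Euc d)} {ψ : Euc d × Euc d → Euc d}
  {U : Euc d × Euc d → Euc d →L[ℝ] Euc d} {K : Set (Euc d)} {y : ℝ → Euc d}

theorem IsLocalGauge.hasOrder_psi_sub (hG : IsLocalGauge D ψ U) (hK : IsCompact K)
    (hKconv : Convex ℝ K) (hKD : K ×ˢ K ⊆ D) (hy : IsHolder T p ω y)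
    (hyK : ∀ s ∈ Set.Icc 0 T, y s ∈ K) :
    HasOrder₂ T p ω 2 fun s t => ψ (y s, y t) - (y t - y s) := by
  obtain ⟨C, hC⟩ := hG.exists_norm_psi_sub_le hK hKconv hKD
  refine (HasOrder.mul (HasOrder.norm hy) (HasOrder.norm hy)).of_norm_le C
    fun q ⟨hs, hst, ht⟩ => ?_
  rw [← sq]
  exact hC _ (hyK _ ⟨hs, hst.trans ht⟩) _ (hyK _ ⟨hs.trans hst, ht⟩)

theorem IsLocalGauge.hasOrder_U_sub_id_add (hG : IsLocalGauge D ψ U) (hK : IsCompact K)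
    (hKconv : Convex ℝ K) (hKD : K ×ˢ K ⊆ D) (hy : IsHolder T p ω y)
    (hyK : ∀ s ∈ Set.Icc 0 T, y s ∈ K) :
    HasOrder₂ T p ω 2 fun s t =>
      U (y t, y s) - .id ℝ (Euc d) + partialSnd U (y t, y t) (y t - y s) := by
  obtain ⟨C, hC⟩ := hG.exists_norm_U_sub_id_le hK hKconv hKD
  refine (HasOrder.mul (HasOrder.norm hy) (HasOrder.norm hy)).of_norm_le C
    fun q ⟨hs, hst, ht⟩ => ?_
  rw [← sq]
  exact hC _ (hyK _ ⟨hs, hst.trans ht⟩) _ (hyK _ ⟨hs.trans hst, ht⟩)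

theorem IsLocalGauge.hasOrder_psi_cocycle (hω : IsControl T ω) (hp : 0 < p)
    (hG : IsLocalGauge D ψ U) (hK : IsCompact K) (hKconv : Convex ℝ K) (hKD : K ×ˢ K ⊆ D)
    (hy : IsHolder T p ω y) (hyK : ∀ s ∈ Set.Icc 0 T, y s ∈ K) :
    HasOrder₃ T p ω 3 fun s t u => ψ (y s, y u) - ψ (y s, y t) - ψ (y t, y u)
      - partialSnd (partialSnd ψ) (y s, y s) (y t - y s) (y u - y t) := by
  obtain ⟨C, hC⟩ := hG.exists_norm_psi_cocycle_le hK hKconv hKD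
  have hst := (hy.left hω hp).norm
  have htu := (hy.right hω hp).norm
  refine ((hst.mul (htu.mul htu)).add ((hst.mul hst).mul htu)).of_norm_le C
    fun q ⟨hs, hst, htu, hu⟩ => ?_
  rw [← sq, ← sq]
  exact hC _ (hyK _ ⟨hs, hst.trans (htu.trans hu)⟩) _ (hyK _ ⟨hs.trans hst, htu.trans hu⟩)
    _ (hyK _ ⟨hs.trans (hst.trans htu), hu⟩)

/-- The expansion of a gauge `(ψ, U)` along a Hölder path `y`, up to the orders that matter for
rough integration: this is all that the integral uses of the gauge. -/
structure HasGaugeExpansion (T p : ℝ) (ω : ℝ → ℝ → ℝ) (ψ : Euc d × Euc d → Euc d)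
    (U : Euc d × Euc d → Euc d →L[ℝ] Euc d) (y : ℝ → Euc d) : Prop where
  psi_sub : HasOrder₂ T p ω 2 fun s t => ψ (y s, y t) - (y t - y s)
  psi_cocycle : HasOrder₃ T p ω 3 fun s t u => ψ (y s, y u) - ψ (y s, y t) - ψ (y t, y u)
    - partialSnd (partialSnd ψ) (y s, y s) (y t - y s) (y u - y t)
  U_sub_id_add : HasOrder₂ T p ω 2 fun s t =>
    U (y t, y s) - .id ℝ (Euc d) + partialSnd U (y t, y t) (y t - y s)
  isHolder_partialSnd_psi : IsHolder T p ω fun s => partialSnd (partialSnd ψ) (y s, y s)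
  isHolder_partialSnd_U : IsHolder T p ω fun s => partialSnd U (y s, y s)

theorem IsLocalGauge.hasGaugeExpansion (hω : IsControl T ω) (hp : 0 < p)
    (hG : IsLocalGauge D ψ U) (hK : IsCompact K) (hKconv : Convex ℝ K) (hKD : K ×ˢ K ⊆ D)
    (hy : IsHolder T p ω y) (hyK : ∀ s ∈ Set.Icc 0 T, y s ∈ K) :
    HasGaugeExpansion T p ω ψ U y where
  psi_sub := hG.hasOrder_psi_sub hK hKconv hKD hy hyK
  psi_cocycle := hG.hasOrder_psi_cocycle hω hp hK hKconv hKD hy hyK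
  U_sub_id_add := hG.hasOrder_U_sub_id_add hK hKconv hKD hy hyK
  isHolder_partialSnd_psi := hy.comp_diag hG.open_dom
    (contDiffOn_partialSnd (n := 2) hG.open_dom
      (contDiffOn_partialSnd (n := 3) hG.open_dom (hG.contDiffOn_psi 3) (by norm_num))
      (by norm_num)) hK hKD hyK
  isHolder_partialSnd_U := hy.comp_diag hG.open_dom
    (contDiffOn_partialSnd (n := 2) hG.open_dom (hG.contDiffOn_U 2) (by norm_num)) hK hKD hyK

end GaugePath

/-! ### The gauge integral -/

section Bilinear

variable {ι F F' G : Type*} [NormedAddCommGroup F] [NormedSpace ℝ F] [NormedAddCommGroup F']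
  [NormedSpace ℝ F'] [NormedAddCommGroup G] [NormedSpace ℝ G] {S : Set ι} {e : ι → ℝ} {n : ℕ}

theorem HasOrder.sub_of_comp_sub {β β' : ι → F →L[ℝ] G} {A : ι → F →L[ℝ] F}
    (hβ : HasOrder S e 0 β) (hA : HasOrder S e n fun i => A i - .id ℝ F)
    (h : HasOrder S e n fun i => (β i).comp (A i) - β' i) :
    HasOrder S e n fun i => β i - β' i :=
  (h.sub (zero_add n ▸ hβ.comp hA)).congr fun i _ => by
    rw [ContinuousLinearMap.comp_sub, ContinuousLinearMap.comp_id]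
    abel

theorem HasOrder.app₂_sub_app₂ {M : ι → F →L[ℝ] F' →L[ℝ] G} {a a' : ι → F} {b b' : ι → F'}
    (hM : HasOrder S e 0 M) (ha : HasOrder S e n fun i => a i - a' i) (ha' : HasOrder S e 1 a')
    (hb : HasOrder S e 1 b) (hb' : HasOrder S e n fun i => b i - b' i) :
    HasOrder S e (n + 1) fun i => M i (a i) (b i) - M i (a' i) (b' i) := by
  have h₁ : HasOrder S e (n + 1) fun i => M i (a i - a' i) (b i) :=
    zero_add n ▸ (hM.app ha).app hb
  have h₂ : HasOrder S e (n + 1) fun i => M i (a' i) (b i - b' i) :=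
    add_comm 1 n ▸ (hM.app ha').app hb'
  refine (h₁.add h₂).congr fun i _ => ?_
  simp only [map_sub, sub_apply]
  abel

end Bilinear

section GaugeIntegral

variable {T p : ℝ} {ω : ℝ → ℝ → ℝ} {k d : ℕ} {x : ℝ → Euc k}
  {XX : ℝ → ℝ → EuclideanSpace ℝ (Fin k × Fin k)} {ψ : Euc d × Euc d → Euc d}
  {U : Euc d × Euc d → Euc d →L[ℝ] Euc d} {y : ℝ → Euc d} {y' : ℝ → Euc k →L[ℝ] Euc d}
  {V : Type*} [NormedAddCommGroup V] [NormedSpace ℝ V] {α : ℝ → Euc d →L[ℝ] V}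
  {α' : ℝ → Euc k →L[ℝ] Euc d →L[ℝ] V}

theorem HasGaugeExpansion.hasOrder_psi (hω : IsControl T ω) (hp : 0 < p)
    (hψU : HasGaugeExpansion T p ω ψ U y) (hy : IsHolder T p ω y) :
    HasOrder₂ T p ω 1 fun s t => ψ (y s, y t) :=
  ((HasOrder.of_succ hψU.psi_sub (hω.hasOrder₂_scale hp)).add hy).congr
    fun _ _ => sub_add_cancel _ _

theorem HasGaugeExpansion.hasOrder_U_sub_id (hω : IsControl T ω) (hp : 0 < p)
    (hψU : HasGaugeExpansion T p ω ψ U y) (hy : IsHolder T p ω y) :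
    HasOrder₂ T p ω 1 fun s t => U (y t, y s) - .id ℝ (Euc d) :=
  ((HasOrder.of_succ hψU.U_sub_id_add (hω.hasOrder₂_scale hp)).sub
    ((hψU.isHolder_partialSnd_U.hasOrder_snd hω hp).app hy)).congr
    fun _ _ => add_sub_cancel_right _ _

theorem IsControlledOneForm.hasOrder_remainder (hω : IsControl T ω)
    (hα : IsControlledOneForm T p ω x U y α α') :
    HasOrder₂ T p ω 2 fun s t => (α t).comp (U (y t, y s)) - α s - α' s (x t - x s) := by
  obtain ⟨-, -, C, hC⟩ := hα
  exact hω.hasOrder₂_of_bound C fun s t hs hst ht => (hC hs hst ht).1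

theorem IsControlledOneForm.isHolder_deriv_apply (hω : IsControl T ω) (hp : 0 < p)
    (hα : IsControlledOneForm T p ω x U y α α') (hψU : HasGaugeExpansion T p ω ψ U y)
    (hy : IsHolder T p ω y) (v : Euc k) : IsHolder T p ω fun s => α' s v := by
  obtain ⟨-, hα', C, hC⟩ := hα
  have hcomp : HasOrder₂ T p ω 1 fun s t => (α' t v).comp (U (y t, y s)) - α' s v :=
    hω.hasOrder₂_of_bound (C * ‖v‖) fun s t hs hst ht => by
      simpa only [Nat.cast_one] using (hC hs hst ht).2 v
  exact HasOrder.sub_of_comp_sub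
    (hasOrder₂_snd_of_continuousOn (hα'.clm_apply continuousOn_const))
    (hψU.hasOrder_U_sub_id hω hp hy) hcomp

theorem IsControlledOneForm.isHolder (hω : IsControl T ω) (hp : 0 < p) (hx : IsHolder T p ω x)
    (hα : IsControlledOneForm T p ω x U y α α') (hψU : HasGaugeExpansion T p ω ψ U y)
    (hy : IsHolder T p ω y) : IsHolder T p ω α := by
  have hcomp : HasOrder₂ T p ω 1 fun s t => (α t).comp (U (y t, y s)) - α s :=
    ((HasOrder.of_succ (hα.hasOrder_remainder hω) (hω.hasOrder₂_scale hp)).add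
      ((hasOrder₂_fst_of_continuousOn hα.2.1).app hx)).congr fun _ _ => sub_add_cancel _ _
  exact HasOrder.sub_of_comp_sub (hasOrder₂_snd_of_continuousOn hα.1)
    (hψU.hasOrder_U_sub_id hω hp hy) hcomp

theorem IsControlledOneForm.hasOrder_sub (hω : IsControl T ω) (hp : 0 < p)
    (hx : IsHolder T p ω x) (hα : IsControlledOneForm T p ω x U y α α')
    (hψU : HasGaugeExpansion T p ω ψ U y) (hy : IsHolder T p ω y) :
    HasOrder₂ T p ω 2 fun s t => α t - α s - α' s (x t - x s)
      - (α s).comp (partialSnd U (y s, y s) (y t - y s)) := by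
  have hαHolder := hα.isHolder hω hp hx hψU hy
  have hU := hψU.isHolder_partialSnd_U
  have htransport := (hαHolder.hasOrder_snd hω hp).comp hψU.U_sub_id_add
  have hαdiff := HasOrder.comp hαHolder ((hU.hasOrder_snd hω hp).app hy)
  have hUdiff := (hαHolder.hasOrder_fst hω hp).comp (HasOrder.app hU hy)
  refine ((((hα.hasOrder_remainder hω).sub htransport).add hαdiff).add hUdiff).congr fun _ _ => ?_
  simp only [ContinuousLinearMap.comp_sub, ContinuousLinearMap.comp_add,
    ContinuousLinearMap.sub_comp, ContinuousLinearMap.comp_id, sub_apply]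
  abel

theorem IsCRP.hasOrder_sub (hω : IsControl T ω) (hp : 0 < p) (hx : IsHolder T p ω x)
    (hy : IsCRP p ω x 0 T y y') :
    HasOrder₃ T p ω 2 fun s t u => y u - y t - y' s (x u - x t) :=
  (((hy.hasOrder_remainder hω).right hω hp).add
    (((hy.isHolder_deriv hω).left hω hp).app (hx.right hω hp))).congr fun _ _ => by
      simp only [sub_apply]
      abel

/-- The bilinear form `(α ∘ S^𝒢 + α')_s` on `ℝ^k`, pulled back by `y'_s`: the coefficient of
`𝕏_{s,t}` in the gauge integrand. -/
def gaugeForm (ψ : Euc d × Euc d → Euc d) (U : Euc d × Euc d → Euc d →L[ℝ] Euc d)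
    (y : ℝ → Euc d) (y' : ℝ → Euc k →L[ℝ] Euc d) (α : ℝ → Euc d →L[ℝ] V)
    (α' : ℝ → Euc k →L[ℝ] Euc d →L[ℝ] V) (s : ℝ) : Euc k →L[ℝ] Euc k →L[ℝ] V :=
  ((ContinuousLinearMap.compL ℝ _ _ _ (α s)).comp
      (partialSnd U (y s, y s) - partialSnd (partialSnd ψ) (y s, y s))).bilinearComp (y' s) (y' s)
    + (α' s).bilinearComp (.id ℝ (Euc k)) (y' s)

theorem gaugeForm_apply (s : ℝ) (v w : Euc k) :
    gaugeForm ψ U y y' α α' s v w =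
      α s ((partialSnd U (y s, y s) - partialSnd (partialSnd ψ) (y s, y s)) (y' s v) (y' s w))
        + α' s v (y' s w) :=
  rfl

theorem gaugeIntegrand_eq (s t : ℝ) :
    gaugeIntegrand ψ U XX y y' α α' s t =
      α s (ψ (y s, y t)) + tapply (fun v w => gaugeForm ψ U y y' α α' s v w) (XX s t) := by
  simp only [gaugeForm_apply, tapply_add_form, ← map_tapply, gaugeIntegrand, map_add, add_assoc]
  rfl

theorem IsHolder.gaugeForm_apply (hω : IsControl T ω) (hp : 0 < p)
    (hψU : HasGaugeExpansion T p ω ψ U y) (hy' : IsHolder T p ω y') (hα : IsHolder T p ω α)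
    (hα' : ∀ v, IsHolder T p ω fun s => α' s v) (v w : Euc k) :
    IsHolder T p ω fun s => gaugeForm ψ U y y' α α' s v w :=
  have hy'_apply (v : Euc k) : IsHolder T p ω fun s => y' s v := hy'.app hω hp (.const v)
  have hS := hψU.isHolder_partialSnd_U.sub hψU.isHolder_partialSnd_psi
  (hα.app hω hp ((hS.app hω hp (hy'_apply v)).app hω hp (hy'_apply w))).add
    ((hα' v).app hω hp (hy'_apply w))

/-- The bilinear first-order terms of `δz̃` match the form that Chen's identity produces. -/
theorem HasGaugeExpansion.hasOrder_gaugeForm_sub (hω : IsControl T ω) (hp : 0 < p)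
    (hx : IsHolder T p ω x) (hψU : HasGaugeExpansion T p ω ψ U y) (hy : IsCRP p ω x 0 T y y')
    (hα : ContinuousOn α (Set.Icc 0 T)) (hα' : ContinuousOn α' (Set.Icc 0 T)) :
    HasOrder₃ T p ω 3 fun s t u => gaugeForm ψ U y y' α α' s (x t - x s) (x u - x t)
      + α s (partialSnd (partialSnd ψ) (y s, y s) (y t - y s) (y u - y t))
      - α s (partialSnd U (y s, y s) (y t - y s) (ψ (y t, y u)))
      - α' s (x t - x s) (ψ (y t, y u)) := by
  have hyHolder := hy.isHolder hω hp hx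
  have hy'₀ := HasOrder₂.left hω hp ((hy.isHolder_deriv hω).hasOrder_fst hω hp)
  have hα₀ : HasOrder₃ T p ω 0 fun s _ _ => α s :=
    HasOrder₂.left hω hp (hasOrder₂_fst_of_continuousOn hα)
  have hα'₀ : HasOrder₃ T p ω 0 fun s _ _ => α' s :=
    HasOrder₂.left hω hp (hasOrder₂_fst_of_continuousOn hα')
  have hψ₁ := (hψU.hasOrder_psi hω hp hyHolder).right hω hp
  have hyst := (hy.hasOrder_remainder hω).left hω hp
  have hytu := hy.hasOrder_sub hω hp hx
  have hψtu : HasOrder₃ T p ω 2 fun s t u => ψ (y t, y u) - y' s (x u - x t) :=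
    ((hψU.psi_sub.right hω hp).add hytu).congr fun _ _ => sub_add_sub_cancel _ _ _
  have hy'x := hy'₀.app (hx.left hω hp)
  have hψterm := hα₀.app (.app₂_sub_app₂ (HasOrder₂.left hω hp
    (hψU.isHolder_partialSnd_psi.hasOrder_fst hω hp)) hyst hy'x (hyHolder.right hω hp) hytu)
  have hUterm := hα₀.app (.app₂_sub_app₂ (HasOrder₂.left hω hp
    (hψU.isHolder_partialSnd_U.hasOrder_fst hω hp)) hyst hy'x hψ₁ hψtu)
  have hα'term := (hα'₀.app (hx.left hω hp)).app hψtu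
  refine ((hψterm.sub hUterm).sub hα'term).congr fun _ _ => ?_
  simp only [gaugeForm_apply, sub_apply, map_sub]
  abel

theorem hasOrder_gaugeIntegrand_delta (hω : IsControl T ω) (hp : 0 < p)
    (hX : IsRoughPath T p ω x XX) (hψU : HasGaugeExpansion T p ω ψ U y)
    (hy : IsCRP p ω x 0 T y y') (hα : IsControlledOneForm T p ω x U y α α') :
    HasOrder₃ T p ω 3 fun s t u => gaugeIntegrand ψ U XX y y' α α' s u
      - gaugeIntegrand ψ U XX y y' α α' s t - gaugeIntegrand ψ U XX y y' α α' t u := by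
  have hx := hX.isHolder hω
  have hyHolder := hy.isHolder hω hp hx
  have hαHolder := hα.isHolder hω hp hx hψU hyHolder
  have hform (v w : Euc k) := IsHolder.gaugeForm_apply hω hp hψU (hy.isHolder_deriv hω) hαHolder
    (hα.isHolder_deriv_apply hω hp hψU hyHolder) v w
  have hcocycle := (HasOrder₂.left hω hp (hαHolder.hasOrder_fst hω hp)).app hψU.psi_cocycle
  have hαterm := (HasOrder₂.left hω hp (hα.hasOrder_sub hω hp hx hψU hyHolder)).app
    ((hψU.hasOrder_psi hω hp hyHolder).right hω hp)
  have hbilin := hψU.hasOrder_gaugeForm_sub hω hp hx hy hα.1 hα.2.1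
  have hXX : HasOrder₃ T p ω 3 fun s t u => tapply (fun v w =>
      gaugeForm ψ U y y' α α' t v w - gaugeForm ψ U y y' α α' s v w) (XX t u) :=
    HasOrder.tapply ((hX.hasOrder_snd_level hω).right hω hp) fun v w => (hform v w).left hω hp
  refine (((hcocycle.sub hαterm).add hbilin).sub hXX).congr fun q ⟨hs, hst, htu, hu⟩ => ?_
  simp only [gaugeIntegrand_eq, hX.chen hs hst htu hu, tapply_add, tapply_sub_form,
    tapply_tensorE, map_sub, sub_apply, ContinuousLinearMap.comp_apply]
  abel

theorem hasOrder_gaugeIntegrand_sub (hω : IsControl T ω) (hp : 0 < p)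
    (hX : IsRoughPath T p ω x XX) (hψU : HasGaugeExpansion T p ω ψ U y)
    (hy : IsCRP p ω x 0 T y y') (hα : IsControlledOneForm T p ω x U y α α') :
    HasOrder₂ T p ω 2 fun s t =>
      gaugeIntegrand ψ U XX y y' α α' s t - (α s).comp (y' s) (x t - x s) := by
  have hx := hX.isHolder hω
  have hyHolder := hy.isHolder hω hp hx
  have hαHolder := hα.isHolder hω hp hx hψU hyHolder
  have hform (v w : Euc k) := IsHolder.gaugeForm_apply hω hp hψU (hy.isHolder_deriv hω) hαHolder
    (hα.isHolder_deriv_apply hω hp hψU hyHolder) v w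
  have hψ := (hαHolder.hasOrder_fst hω hp).app (hψU.psi_sub.add (hy.hasOrder_remainder hω))
  have hXX : HasOrder₂ T p ω 2 fun s t =>
      tapply (fun v w => gaugeForm ψ U y y' α α' s v w) (XX s t) :=
    HasOrder.tapply (hX.hasOrder_snd_level hω) fun v w => (hform v w).hasOrder_fst hω hp
  refine (hψ.add hXX).congr fun _ _ => ?_
  simp only [gaugeIntegrand_eq, map_add, map_sub, ContinuousLinearMap.comp_apply]
  abel

end GaugeIntegral

section Integral

variable {T p : ℝ} {ω : ℝ → ℝ → ℝ} {k : ℕ} {x : ℝ → Euc k} {V : Type*} [NormedAddCommGroup V]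
  {Ξ : ℝ → ℝ → V}

theorem IsControl.eqOn_of_norm_sub_sub_le {θ C C' : ℝ} {z w : ℝ → V} (hω : IsControl T ω)
    (hθ : 1 < θ) (h₀ : w 0 = z 0)
    (hw : ∀ ⦃s t⦄, 0 ≤ s → s ≤ t → t ≤ T → ‖w t - w s - Ξ s t‖ ≤ C * ω s t ^ θ)
    (hz : ∀ ⦃s t⦄, 0 ≤ s → s ≤ t → t ≤ T → ‖z t - z s - Ξ s t‖ ≤ C' * ω s t ^ θ) :
    Set.EqOn w z (Set.Icc 0 T) := by
  intro s hs
  have hdiff : w s - z s = w 0 - z 0 :=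
    hω.eq_of_norm_sub_le_rpow (f := fun r => w r - z r) (C := C + C') hθ
      (fun s t hs hst ht => by
        rw [add_mul]
        refine le_of_eq_of_le ?_ (norm_sub_le_of_le (hw hs hst ht) (hz hs hst ht))
        congr 1
        abel) le_rfl hs.1 hs.2
  rwa [h₀, sub_self, sub_eq_zero] at hdiff

theorem exists_isCRP_of_hasOrder_delta [NormedSpace ℝ V] [CompleteSpace V] (hω : IsControl T ω)
    (hp : 0 < p) (hp3 : p < 3) (hx : IsHolder T p ω x) {z' : ℝ → Euc k →L[ℝ] V}
    (hz' : IsHolder T p ω z')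
    (hδ : HasOrder₃ T p ω 3 fun s t u => Ξ s u - Ξ s t - Ξ t u)
    (hΞ : HasOrder₂ T p ω 2 fun s t => Ξ s t - z' s (x t - x s)) :
    ∃ z, IsCRP p ω x 0 T z z' ∧ z 0 = 0 ∧ ∃ C, ∀ ⦃s t⦄, 0 ≤ s → s ≤ t → t ≤ T →
      ‖z t - z s - Ξ s t‖ ≤ C * ω s t ^ (3 / p) := by
  obtain ⟨C, hC, hadd⟩ := HasOrder₃.exists_isAlmostAdditive hω hδ
  rw [Nat.cast_ofNat] at hadd
  obtain ⟨z, hz₀, K, hz⟩ := hadd.exists_sewing hω ((one_lt_div hp).2 hp3) hC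
  have hzΞ : HasOrder₂ T p ω 3 fun s t => z t - z s - Ξ s t := hω.hasOrder₂_of_bound K hz
  have hrem : HasOrder₂ T p ω 2 fun s t => z t - z s - z' s (x t - x s) :=
    ((HasOrder.of_succ hzΞ (hω.hasOrder₂_scale hp)).add hΞ).congr
      fun _ _ => sub_add_sub_cancel _ _ _
  exact ⟨z, .of_hasOrder hω hp hx hrem hz', hz₀, K, hz⟩

end Integral

theorem exists_unique_gauge_integral_general {T p : ℝ} (hp : 0 < p) (hp3 : p < 3) {k d : ℕ}
    {ω : ℝ → ℝ → ℝ} (hω : IsControl T ω)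
    {x : ℝ → Euc k} {XX : ℝ → ℝ → EuclideanSpace ℝ (Fin k × Fin k)}
    (hX : IsRoughPath T p ω x XX) {D : Set (Euc d × Euc d)} {ψ : Euc d × Euc d → Euc d}
    {U : Euc d × Euc d → Euc d →L[ℝ] Euc d} (hG : IsLocalGauge D ψ U)
    {W₀ : Set (Euc d)} (hW₀conv : Convex ℝ W₀) (hWD : W₀ ×ˢ W₀ ⊆ D)
    {y : ℝ → Euc d} {y' : ℝ → Euc k →L[ℝ] Euc d}
    (hy : IsCRP p ω x 0 T y y') (hyW : ∀ s ∈ Set.Icc (0 : ℝ) T, y s ∈ W₀)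
    {V : Type*} [NormedAddCommGroup V] [NormedSpace ℝ V] [CompleteSpace V]
    {α : ℝ → Euc d →L[ℝ] V} {α' : ℝ → Euc k →L[ℝ] Euc d →L[ℝ] V}
    (hα : IsControlledOneForm T p ω x U y α α') :
    ∃ (z : ℝ → V) (z' : ℝ → Euc k →L[ℝ] V),
      (IsCRP p ω x 0 T z z' ∧ z 0 = 0 ∧
        (∀ s ∈ Set.Icc (0 : ℝ) T, z' s = (α s).comp (y' s)) ∧
        ∃ C : ℝ, ∀ ⦃s t : ℝ⦄, 0 ≤ s → s ≤ t → t ≤ T →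
          ‖z t - z s - gaugeIntegrand ψ U XX y y' α α' s t‖ ≤ C * ω s t ^ (3 / p)) ∧
      ∀ (w : ℝ → V) (w' : ℝ → Euc k →L[ℝ] V),
        (IsCRP p ω x 0 T w w' ∧ w 0 = 0 ∧
          (∀ s ∈ Set.Icc (0 : ℝ) T, w' s = (α s).comp (y' s)) ∧
          ∃ C : ℝ, ∀ ⦃s t : ℝ⦄, 0 ≤ s → s ≤ t → t ≤ T →
            ‖w t - w s - gaugeIntegrand ψ U XX y y' α α' s t‖ ≤ C * ω s t ^ (3 / p)) →
        ∀ s ∈ Set.Icc (0 : ℝ) T, w s = z s ∧ w' s = z' s := by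
  have hx := hX.isHolder hω
  have hyHolder := hy.isHolder hω hp hx
  have hhull : convexHull ℝ (y '' Set.Icc 0 T) ⊆ W₀ :=
    convexHull_min (Set.image_subset_iff.2 hyW) hW₀conv
  have hψU := hG.hasGaugeExpansion hω hp
    (isCompact_convexHull (isCompact_Icc.image_of_continuousOn hy.1)) (convex_convexHull ℝ _)
    ((Set.prod_mono hhull hhull).trans hWD) hyHolder
    fun s hs => subset_convexHull ℝ _ (Set.mem_image_of_mem y hs)
  obtain ⟨z, hzCRP, hz₀, C, hz⟩ := exists_isCRP_of_hasOrder_delta hω hp hp3 hx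
    ((hα.isHolder hω hp hx hψU hyHolder).comp hω hp (hy.isHolder_deriv hω))
    (hasOrder_gaugeIntegrand_delta hω hp hX hψU hy hα)
    (hasOrder_gaugeIntegrand_sub hω hp hX hψU hy hα)
  refine ⟨z, _, ⟨hzCRP, hz₀, fun s _ => rfl, C, hz⟩, ?_⟩
  rintro w w' ⟨-, hw₀, hw', C', hw⟩ s hs
  have hθ : 1 < 3 / p := (one_lt_div hp).2 hp3
  exact ⟨hω.eqOn_of_norm_sub_sub_le hθ (hw₀.trans hz₀.symm) hw hz hs, hw' s hs⟩

/-- **Existence and uniqueness of the rough integral of a controlled one-form along a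
controlled path** (Euclidean version of Theorem 3.21 of Driver–Semko): there is a unique
controlled rough path `(z, z')` with `z 0 = 0`, `z'_s = α_s ∘ y'_s` and
`z_t − z_s ≈₃ z̃_{s,t}`. -/
theorem exists_unique_gauge_integral
    {T p : ℝ} (hT : 0 < T) (hp1 : 1 ≤ p) (hp3 : p < 3) {k : ℕ} (hk : 1 ≤ k)
    {ω : ℝ → ℝ → ℝ} (hω : IsControl T ω)
    {x : ℝ → Euc k} {XX : ℝ → ℝ → EuclideanSpace ℝ (Fin k × Fin k)}
    (hX : IsRoughPath T p ω x XX) (hgeo : IsWeakGeometric T x XX)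
    {d : ℕ} {D : Set (Euc d × Euc d)}
    {ψ : Euc d × Euc d → Euc d} {U : Euc d × Euc d → Euc d →L[ℝ] Euc d}
    (hG : IsLocalGauge D ψ U)
    {W₀ : Set (Euc d)} (hW₀open : IsOpen W₀) (hW₀conv : Convex ℝ W₀)
    (hWD : W₀ ×ˢ W₀ ⊆ D)
    {y : ℝ → Euc d} {y' : ℝ → Euc k →L[ℝ] Euc d}
    (hy : IsCRP p ω x 0 T y y') (hyW : ∀ s ∈ Set.Icc (0 : ℝ) T, y s ∈ W₀)
    {V : Type*} [NormedAddCommGroup V] [NormedSpace ℝ V] [CompleteSpace V]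
    {α : ℝ → Euc d →L[ℝ] V} {α' : ℝ → Euc k →L[ℝ] Euc d →L[ℝ] V}
    (hα : IsControlledOneForm T p ω x U y α α') :
    ∃ (z : ℝ → V) (z' : ℝ → Euc k →L[ℝ] V),
      (IsCRP p ω x 0 T z z' ∧ z 0 = 0 ∧
        (∀ s ∈ Set.Icc (0 : ℝ) T, z' s = (α s).comp (y' s)) ∧
        ∃ C : ℝ, ∀ ⦃s t : ℝ⦄, 0 ≤ s → s ≤ t → t ≤ T →
          ‖z t - z s - gaugeIntegrand ψ U XX y y' α α' s t‖ ≤ C * ω s t ^ (3 / p)) ∧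
      ∀ (w : ℝ → V) (w' : ℝ → Euc k →L[ℝ] V),
        (IsCRP p ω x 0 T w w' ∧ w 0 = 0 ∧
          (∀ s ∈ Set.Icc (0 : ℝ) T, w' s = (α s).comp (y' s)) ∧
          ∃ C : ℝ, ∀ ⦃s t : ℝ⦄, 0 ≤ s → s ≤ t → t ≤ T →
            ‖w t - w s - gaugeIntegrand ψ U XX y y' α α' s t‖ ≤ C * ω s t ^ (3 / p)) →
        ∀ s ∈ Set.Icc (0 : ℝ) T, w s = z s ∧ w' s = z' s :=
  exists_unique_gauge_integral_general (zero_lt_one.trans_le hp1) hp3 hω hX hG hW₀conv hWD hy hyW hα
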